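/- arXiv:2402.00848 — 2 statements merged into one kernel-verified Lean document; each statement's English description precedes it below -/
import Mathlib

section
/- Let p ∈ [1,∞), let Ω be a compact subset of ℝ^d with a Borel probability measure μ, and let X_N be a finite-dimensional subspace of C(Ω). Assume points ξ^1,…,ξ^m ∈ Ω are such that ‖u‖_p ≤ D max_{1≤j≤m}|u(ξ^j)| for all u ∈ X_N. Then for every f ∈ C(Ω) and every u ∈ X_N satisfying max_{1≤j≤m}|f(ξ^j) − u(ξ^j)| ≤ max_{1≤j≤m}|f(ξ^j) − g(ξ^j)| for all g ∈ X_N, one has ‖f − u‖_p ≤ (2D + 1) d(f, X_N)_∞. -/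
open MeasureTheory

/-- The `L_p(μ)`-norm of a function `f`, `(∫ |f|^p dμ)^(1/p)`. -/
noncomputable def LpNorm {Ω : Type*} [MeasurableSpace Ω] (μ : Measure Ω) (p : ℝ)
    (f : Ω → ℝ) : ℝ :=
  (∫ ω, |f ω| ^ p ∂μ) ^ (1 / p)

/-- The uniform norm `sup_ω |f ω|`. -/
noncomputable def supNorm {Ω : Type*} (f : Ω → ℝ) : ℝ :=
  ⨆ ω, |f ω|

/-- The best uniform approximation `d(f, X)_∞ = inf_{g ∈ X} ‖f - g‖_∞`. -/
noncomputable def distInfty {Ω : Type*} [TopologicalSpace Ω]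
    (f : C(Ω, ℝ)) (X : Submodule ℝ C(Ω, ℝ)) : ℝ :=
  ⨅ g : X, supNorm (fun ω => f ω - (g : C(Ω, ℝ)) ω)

/-!
For `g ∈ X` write `f - u = (f - g) + (g - u)`. The first summand has `L_p`-norm at most
`‖f - g‖_∞` because `μ` has mass one. The second lies in `X`, so its `L_p`-norm is at most `D` times
its maximum over the sample. On the sample `u` is at least as close to `f` as `g` is, so that
maximum is at most `2‖f - g‖_∞`. Finally take the infimum over `g`.
-/

section LpNorm

variable {Ω : Type*} [MeasurableSpace Ω] {μ : Measure Ω} {p : ℝ} {f g : Ω → ℝ}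

lemma LpNorm_eq_lpNorm (hp : 0 < p) (hf : AEStronglyMeasurable f μ) :
    LpNorm μ p f = lpNorm f (ENNReal.ofReal p) μ := by
  rw [lpNorm_eq_integral_norm_rpow_toReal (ENNReal.ofReal_pos.2 hp).ne' ENNReal.ofReal_ne_top hf,
    ENNReal.toReal_ofReal hp.le, LpNorm, one_div]
  simp only [Real.norm_eq_abs]

lemma LpNorm_add_le (hp : 1 ≤ p) (hf : MemLp f (ENNReal.ofReal p) μ)
    (hg : MemLp g (ENNReal.ofReal p) μ) :
    LpNorm μ p (f + g) ≤ LpNorm μ p f + LpNorm μ p g := by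
  have hp_pos : 0 < p := one_pos.trans_le hp
  rw [LpNorm_eq_lpNorm hp_pos (hf.add hg).aestronglyMeasurable,
    LpNorm_eq_lpNorm hp_pos hf.aestronglyMeasurable,
    LpNorm_eq_lpNorm hp_pos hg.aestronglyMeasurable]
  exact lpNorm_add_le hf (ENNReal.one_le_ofReal.2 hp)

lemma LpNorm_le_of_forall_abs_le [IsProbabilityMeasure μ] (hp : 0 < p) {C : ℝ}
    (hfC : ∀ ω, |f ω| ≤ C) : LpNorm μ p f ≤ C := by
  obtain ⟨ω₀⟩ : Nonempty Ω := nonempty_of_isProbabilityMeasure μ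
  have hC : 0 ≤ C := (abs_nonneg _).trans (hfC ω₀)
  have integral_le : ∫ ω, |f ω| ^ p ∂μ ≤ C ^ p := by
    calc ∫ ω, |f ω| ^ p ∂μ ≤ ∫ _, C ^ p ∂μ :=
          integral_mono_of_nonneg (.of_forall fun ω ↦ by positivity) (integrable_const _)
            (.of_forall fun ω ↦ Real.rpow_le_rpow (abs_nonneg _) (hfC ω) hp.le)
      _ = C ^ p := by simp
  calc LpNorm μ p f ≤ (C ^ p) ^ (1 / p) := by unfold LpNorm; gcongr
    _ = C := by rw [one_div, Real.rpow_rpow_inv hC hp.ne']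

end LpNorm

section UniformNorm

variable {Ω : Type*} [TopologicalSpace Ω] [CompactSpace Ω]

lemma supNorm_eq_norm (f : C(Ω, ℝ)) : supNorm f = ‖f‖ :=
  f.norm_eq_iSup_norm.symm

lemma distInfty_eq_infDist (f : C(Ω, ℝ)) (X : Submodule ℝ C(Ω, ℝ)) :
    distInfty f X = Metric.infDist f X := by
  rw [Metric.infDist_eq_iInf]
  exact iInf_congr fun g ↦ (supNorm_eq_norm (f - g.1)).trans (dist_eq_norm f g.1).symm

end UniformNorm

/-- The discrete uniform seminorm `max_j |f (ξ j)|` of `f` on a family of sample points `ξ`, which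
may be infinite or empty; on the empty family it is `0`. -/
noncomputable def sampleNorm {ι Ω : Type*} [TopologicalSpace Ω] (ξ : ι → Ω) (f : C(Ω, ℝ)) : ℝ :=
  ⨆ j, |f (ξ j)|

section Sampling

variable {ι Ω : Type*} [TopologicalSpace Ω] [CompactSpace Ω] (ξ : ι → Ω)

lemma abs_apply_le_sampleNorm (f : C(Ω, ℝ)) (j : ι) : |f (ξ j)| ≤ sampleNorm ξ f :=
  le_ciSup (f := fun j ↦ |f (ξ j)|)
    ⟨‖f‖, Set.forall_mem_range.2 fun j ↦ f.norm_coe_le_norm (ξ j)⟩ j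

lemma sampleNorm_le_norm (f : C(Ω, ℝ)) : sampleNorm ξ f ≤ ‖f‖ :=
  Real.iSup_le (fun j ↦ f.norm_coe_le_norm (ξ j)) (norm_nonneg f)

lemma sampleNorm_sub_le (f g : C(Ω, ℝ)) :
    sampleNorm ξ (f - g) ≤ sampleNorm ξ f + sampleNorm ξ g := by
  have sampleNorm_nonneg (h : C(Ω, ℝ)) : 0 ≤ sampleNorm ξ h :=
    Real.iSup_nonneg fun _ ↦ abs_nonneg _
  refine Real.iSup_le (fun j ↦ ?_) (add_nonneg (sampleNorm_nonneg f) (sampleNorm_nonneg g))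
  exact (abs_sub _ _).trans
    (add_le_add (abs_apply_le_sampleNorm ξ f j) (abs_apply_le_sampleNorm ξ g j))

variable {ξ} in
lemma sampleNorm_sub_le_two_mul_norm_sub {f u g : C(Ω, ℝ)}
    (hug : sampleNorm ξ (f - u) ≤ sampleNorm ξ (f - g)) :
    sampleNorm ξ (g - u) ≤ 2 * ‖f - g‖ := by
  calc sampleNorm ξ (g - u) = sampleNorm ξ ((f - u) - (f - g)) := by rw [sub_sub_sub_cancel_left]
    _ ≤ sampleNorm ξ (f - u) + sampleNorm ξ (f - g) := sampleNorm_sub_le ξ _ _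
    _ ≤ 2 * ‖f - g‖ := by linarith [sampleNorm_le_norm ξ (f - g)]

end Sampling

section Recovery

variable {ι Ω : Type*} [TopologicalSpace Ω] [CompactSpace Ω] [MeasurableSpace Ω]
  [OpensMeasurableSpace Ω] {μ : Measure Ω} [IsProbabilityMeasure μ] {p D : ℝ} {ξ : ι → Ω}

lemma LpNorm_sub_le_mul_norm_sub (hp : 1 ≤ p) (hD : 0 ≤ D) {f u g : C(Ω, ℝ)}
    (hLDI : LpNorm μ p ⇑(g - u) ≤ D * sampleNorm ξ (g - u))
    (hug : sampleNorm ξ (f - u) ≤ sampleNorm ξ (f - g)) :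
    LpNorm μ p ⇑(f - u) ≤ (2 * D + 1) * ‖f - g‖ := by
  have memLp (h : C(Ω, ℝ)) : MemLp h (ENNReal.ofReal p) μ :=
    h.continuous.memLp_of_hasCompactSupport (.of_compactSpace h)
  calc LpNorm μ p ⇑(f - u) = LpNorm μ p (⇑(f - g) + ⇑(g - u)) := by
        rw [← ContinuousMap.coe_add, sub_add_sub_cancel]
    _ ≤ LpNorm μ p ⇑(f - g) + LpNorm μ p ⇑(g - u) := LpNorm_add_le hp (memLp _) (memLp _)
    _ ≤ ‖f - g‖ + D * (2 * ‖f - g‖) := by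
        gcongr
        · exact LpNorm_le_of_forall_abs_le (one_pos.trans_le hp) (f - g).norm_coe_le_norm
        · exact hLDI.trans (by gcongr; exact sampleNorm_sub_le_two_mul_norm_sub hug)
    _ = (2 * D + 1) * ‖f - g‖ := by ring

theorem stmt_11_general (hp : 1 ≤ p) (hD : 0 ≤ D) {X : Submodule ℝ C(Ω, ℝ)}
    (hLDI : ∀ u ∈ X, LpNorm μ p u ≤ D * sampleNorm ξ u) {f u : C(Ω, ℝ)} (hu_mem : u ∈ X)
    (hu_min : ∀ g ∈ X, sampleNorm ξ (f - u) ≤ sampleNorm ξ (f - g)) :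
    LpNorm μ p ⇑(f - u) ≤ (2 * D + 1) * distInfty f X := by
  have constant_pos : 0 < 2 * D + 1 := by positivity
  rw [distInfty_eq_infDist, ← div_le_iff₀' constant_pos, Metric.le_infDist X.nonempty]
  intro g hg
  rw [div_le_iff₀' constant_pos, dist_eq_norm]
  exact LpNorm_sub_le_mul_norm_sub hp hD (hLDI _ (X.sub_mem hg hu_mem)) (hu_min g hg)

end Recovery

/-- Theorem 5.2: if `‖u‖_p ≤ D max_j |u(ξ^j)|` for all `u ∈ X_N`
(the LDI(p,∞) assumption), then any minimizer `u ∈ X_N` of the discrete uniform distance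
`max_j |f(ξ^j) - u(ξ^j)|` satisfies `‖f - u‖_p ≤ (2D + 1) d(f,X_N)_∞`. -/
theorem stmt_11 (d : ℕ) (Ω : Set (Fin d → ℝ)) (hΩ : IsCompact Ω)
    (μ : Measure Ω) [IsProbabilityMeasure μ]
    (p : ℝ) (hp : 1 ≤ p)
    (X : Submodule ℝ C(Ω, ℝ)) (hfd : FiniteDimensional ℝ X)
    (m : ℕ) (ξ : Fin m → Ω)
    (D : ℝ) (hD : 0 < D)
    (hLDI : ∀ u ∈ X, LpNorm μ p ⇑u ≤ D * ⨆ j, |u (ξ j)|)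
    (f : C(Ω, ℝ)) (u : C(Ω, ℝ)) (hu_mem : u ∈ X)
    (hu_min : ∀ g ∈ X,
      (⨆ j, |f (ξ j) - u (ξ j)|) ≤ ⨆ j, |f (ξ j) - g (ξ j)|) :
    LpNorm μ p (fun ω => f ω - u ω) ≤ (2 * D + 1) * distInfty f X := by
  have : CompactSpace Ω := isCompact_iff_compactSpace.mp hΩ
  exact stmt_11_general hp hD.le hLDI hu_mem hu_min
end

section
/- There exist absolute positive constants C_1, C_2, C_3 with the following property. Let Ω ⊂ ℝ^d be a nonempty set with a probability measure μ, let t > 0, and let X_N be an N-dimensional linear space of bounded measurable real-valued functions on Ω satisfying the Nikol'skii inequality ‖f‖_∞ ≤ t N^{1/2} ‖f‖_2 for all f ∈ X_N. Then there exists a set of m ≤ C_1 t² N points ξ^1,…,ξ^m ∈ Ω such that for every f ∈ X_N both ‖f‖_∞ ≤ C_2^{−1/2} t N^{1/2} ((1/m)∑_{j=1}^m |f(ξ^j)|²)^{1/2} and C_2‖f‖_2² ≤ (1/m)∑_{j=1}^m |f(ξ^j)|² ≤ C_3 t² ‖f‖_2² hold. -/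
open MeasureTheory

/-!
In a basis of `X` the sampled values are the rows of a matrix `U`, and both inequalities compare the
Gram matrix of the chosen rows with that of `μ`. The latter is a limit of convex combinations of
rank-one matrices; rounding the weights to integer multiplicities yields a very long, nearly tight
list of sample points, each contributing little.

Such a list can be split into two parts, each spanning about half of the frame; this is Weaver's
problem, and the smaller part is the new list. It is solved by the interlacing argument of Marcus,
Spielman and Srivastava: the product of the determinants of two weighted Gram matrices is
multi-affine and real stable, with one pair of variables per point, so some choice of one variable
from each pair has largest zero no worse than the average over all choices, and the barrier method
bounds the latter by `1/2 + O(√ε)`. The errors of successive halvings form a geometric series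
dominated by its last term, so halving can go on until a constant multiple of `t² N` points remain.
-/

/-- The increment of `p` under a unit step in coordinate `k`. For the multi-affine functions below
it is the partial derivative `∂p/∂x_k`, without any appeal to calculus. -/
def partialDiff {κ R : Type*} [DecidableEq κ] [CommRing R] (k : κ) (p : (κ → R) → R) :
    (κ → R) → R :=
  fwdDiff (Pi.single k 1) p

local notation "∂[" k "]" => partialDiff k

section Multiaffine

variable {κ R : Type*} [DecidableEq κ] [CommRing R]

/-- `p` is affine in each coordinate separately. -/
def IsMultiaffine (p : (κ → R) → R) : Prop :=
  ∀ x k c, p (x + Pi.single k c) = p x + c * ∂[k] p x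

/-- The function `p` with coordinate `k` translated by one; on multi-affine functions this is the
operator `1 - ∂/∂x_k`. -/
def shift (k : κ) (p : (κ → R) → R) : (κ → R) → R :=
  fun x ↦ p (x - Pi.single k 1)

lemma partialDiff_apply (k : κ) (p : (κ → R) → R) (x : κ → R) :
    ∂[k] p x = p (x + Pi.single k 1) - p x :=
  rfl

lemma partialDiff_comm (k l : κ) (p : (κ → R) → R) : ∂[k] (∂[l] p) = ∂[l] (∂[k] p) := by
  funext x
  simp only [partialDiff_apply, add_right_comm x (Pi.single k 1)]
  ring

namespace IsMultiaffine

variable {p : (κ → R) → R}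

protected lemma partialDiff (hp : IsMultiaffine p) (k : κ) : IsMultiaffine (∂[k] p) := by
  intro x l c
  have h_shifted := hp (x + Pi.single k 1) l c
  have h_base := hp x l c
  simp only [partialDiff_apply, add_right_comm x (Pi.single l _) (Pi.single k 1)] at *
  rw [h_shifted, h_base]
  ring

lemma partialDiff_self (hp : IsMultiaffine p) (k : κ) (x : κ → R) : ∂[k] (∂[k] p) x = 0 := by
  have h_two := hp x k (1 + 1)
  rw [Pi.single_add, ← add_assoc] at h_two
  simp only [partialDiff_apply] at *
  rw [h_two]
  ring

lemma shift_apply (hp : IsMultiaffine p) (k : κ) (x : κ → R) : shift k p x = p x - ∂[k] p x := by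
  rw [shift, sub_eq_add_neg, ← Pi.single_neg, hp]
  ring

lemma apply_add_singles (hp : IsMultiaffine p) (y z : κ) (x : κ → R) (s : R) :
    p (x + Pi.single y s + Pi.single z s) =
      p x + (∂[y] p x + ∂[z] p x) * s + ∂[y] (∂[z] p) x * s ^ 2 := by
  rw [hp, hp.partialDiff z, hp]
  ring

lemma partialDiff_left_apply_add_singles (hp : IsMultiaffine p) (y z : κ) (x : κ → R) (s : R) :
    ∂[y] p (x + Pi.single y s + Pi.single z s) = ∂[y] p x + ∂[y] (∂[z] p) x * s := by
  rw [add_right_comm, hp.partialDiff y, hp.partialDiff_self, hp.partialDiff y, partialDiff_comm z]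
  ring

lemma partialDiff_right_apply_add_singles (hp : IsMultiaffine p) (y z : κ) (x : κ → R) (s : R) :
    ∂[z] p (x + Pi.single y s + Pi.single z s) = ∂[z] p x + ∂[y] (∂[z] p) x * s := by
  rw [add_right_comm, hp.partialDiff_left_apply_add_singles, partialDiff_comm z]

end IsMultiaffine

end Multiaffine

section MeanShift

variable {κ R : Type*} [DecidableEq κ] [Field R] {p : (κ → R) → R}

/-- The average of the translates of `p` by one in coordinate `k` and in coordinate `l`; on
multi-affine functions this is the operator `1 - (∂/∂x_k + ∂/∂x_l) / 2`. -/
def meanShift (k l : κ) (p : (κ → R) → R) : (κ → R) → R :=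
  fun x ↦ (shift k p x + shift l p x) / 2

lemma shift_meanShift (j k l : κ) (p : (κ → R) → R) :
    shift j (meanShift k l p) = meanShift k l (shift j p) := by
  funext x
  simp only [meanShift, shift, sub_right_comm x (Pi.single j 1)]

lemma partialDiff_meanShift (j k l : κ) (p : (κ → R) → R) :
    ∂[j] (meanShift k l p) = meanShift k l (∂[j] p) := by
  funext x
  simp only [meanShift, shift, partialDiff_apply, add_sub_right_comm]
  ring

protected lemma IsMultiaffine.shift (hp : IsMultiaffine p) (k : κ) : IsMultiaffine (shift k p) := by
  intro x l c
  simp only [shift, partialDiff_apply, add_sub_right_comm]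
  exact hp (x - Pi.single k 1) l c

protected lemma IsMultiaffine.meanShift (hp : IsMultiaffine p) (k l : κ) :
    IsMultiaffine (meanShift k l p) := by
  intro x j c
  rw [partialDiff_meanShift]
  have h_k := hp.shift k x j c
  have h_l := hp.shift l x j c
  simp only [meanShift, shift, partialDiff_apply, add_sub_right_comm] at *
  rw [h_k, h_l]
  ring

lemma IsMultiaffine.meanShift_apply [NeZero (2 : R)] (hp : IsMultiaffine p) (k l : κ) (x : κ → R) :
    meanShift k l p x = p x - (∂[k] p x + ∂[l] p x) / 2 := by
  rw [meanShift, hp.shift_apply, hp.shift_apply]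
  field_simp
  ring

end MeanShift

section Rayleigh

variable {κ : Type*} [DecidableEq κ]

/-- A multi-affine function with the Rayleigh (negative dependence) property
`p ∂ᵢ∂ⱼp ≤ ∂ᵢp ∂ⱼp`; real stable multi-affine polynomials have it. -/
structure IsRayleigh (p : (κ → ℝ) → ℝ) : Prop where
  multiaffine : IsMultiaffine p
  mul_partialDiff_le : ∀ x i j, p x * ∂[j] (∂[i] p) x ≤ ∂[i] p x * ∂[j] p x

/-- The point `a` lies above all zeros of `p`: `p` is positive on the orthant `{x | a ≤ x}`. -/
def PosAbove (p : (κ → ℝ) → ℝ) (a : κ → ℝ) : Prop :=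
  ∀ x, a ≤ x → 0 < p x

lemma nonneg_of_forall_nonneg_add_mul {a b : ℝ} (h : ∀ s, 0 ≤ s → 0 ≤ a + s * b) : 0 ≤ b := by
  by_contra! hb
  have ha : 0 ≤ a := by simpa using h 0 le_rfl
  have h_far := h ((a + 1) / -b) (div_nonneg (by linarith) (by linarith))
  rw [div_neg, neg_mul, div_mul_cancel₀ _ hb.ne] at h_far
  linarith

lemma le_add_single {x : κ → ℝ} {k : κ} {c : ℝ} (hc : 0 ≤ c) : x ≤ x + Pi.single k c :=
  le_add_of_nonneg_right (Pi.single_nonneg.2 hc)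

section LineInequality

variable {η P B d q K M X Y Z : ℝ}

lemma le_mul_of_sq_le_mul (hη : 0 ≤ η) (hP : 0 < P) (hd : 0 ≤ d) (hB : B ≤ η * P) (hX : 0 ≤ X)
    (h_disc : Y ^ 2 ≤ X * Z) (h_syzygy : d * X - B * Y + P * Z = 0) : Y ≤ η * X := by
  by_contra! h_lt
  have hY : 0 < Y := (mul_nonneg hη hX).trans_lt h_lt
  have hZ : Z ≤ η * Y := by
    refine le_of_mul_le_mul_left ?_ hP
    linarith [mul_nonneg hd hX, mul_le_mul_of_nonneg_right hB hY.le]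
  have h_sq : Y * Y ≤ Y * (η * X) := by linarith [mul_le_mul_of_nonneg_left hZ hX]
  exact h_lt.not_ge (le_of_mul_le_mul_left h_sq hY)

/-- The two sides compare the values at distance `-(1/2 + η)` along the diagonal line on which
`p` is `P + B s + d s²` and `∂p` is `q + K s + M s²`; `h_wronskian` is the Rayleigh inequality on
that line. -/
lemma diagonal_line_inequality (hη : 0 ≤ η) (hη' : η ≤ 1 / 2) (hP : 0 < P) (hd : 0 ≤ d)
    (hB : B ≤ η * P)
    (h_wronskian : ∀ s : ℝ, 0 ≤
      (d * K - B * M) * (s * s) + 2 * (d * q - M * P) * s + (B * q - K * P)) :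
    (q - K / 2) * (P + B * -(1 / 2 + η) + d * (-(1 / 2 + η)) ^ 2) ≤
      (q + K * -(1 / 2 + η) + M * (-(1 / 2 + η)) ^ 2) * (P - B / 2) := by
  have h_const : 0 ≤ B * q - K * P := by simpa using h_wronskian 0
  have h_lead : 0 ≤ d * K - B * M := by
    refine nonneg_of_forall_nonneg_add_mul (a := B * q - K * P) fun s hs ↦ ?_
    have h_add := h_wronskian √s
    have h_sub := h_wronskian (-√s)
    rw [neg_mul_neg] at h_sub
    rw [Real.mul_self_sqrt hs] at h_add h_sub
    linarith
  have h_disc : (d * q - M * P) ^ 2 ≤ (B * q - K * P) * (d * K - B * M) := by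
    have := discrim_le_zero h_wronskian
    rw [discrim] at this
    linarith
  have h_mid : d * q - M * P ≤ η * (B * q - K * P) :=
    le_mul_of_sq_le_mul hη hP hd hB h_const h_disc (by ring)
  have h_scaled : (1 / 2 + η) ^ 2 * (d * q - M * P) ≤ η * (B * q - K * P) := by
    have h_sq_le : (1 / 2 + η) ^ 2 ≤ 1 := by nlinarith
    calc (1 / 2 + η) ^ 2 * (d * q - M * P)
        ≤ (1 / 2 + η) ^ 2 * (η * (B * q - K * P)) := by gcongr
      _ ≤ η * (B * q - K * P) := mul_le_of_le_one_left (mul_nonneg hη h_const) h_sq_le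
  have h_drop : 0 ≤ (1 / 2 + η) ^ 2 / 2 * (d * K - B * M) := by positivity
  linear_combination h_scaled + h_drop

end LineInequality

namespace IsRayleigh

variable {p : (κ → ℝ) → ℝ} {a x : κ → ℝ}

lemma partialDiff_nonneg (hp : IsRayleigh p) (ha : PosAbove p a) (hx : a ≤ x) (k : κ) :
    0 ≤ ∂[k] p x := by
  refine nonneg_of_forall_nonneg_add_mul (a := p x) fun s hs ↦ ?_
  rw [← hp.multiaffine]
  exact (ha _ (hx.trans (le_add_single hs))).le

lemma partialDiff_partialDiff_nonneg (hp : IsRayleigh p) (ha : PosAbove p a) (hx : a ≤ x)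
    (k l : κ) : 0 ≤ ∂[k] (∂[l] p) x := by
  refine nonneg_of_forall_nonneg_add_mul (a := ∂[l] p x) fun s hs ↦ ?_
  rw [← hp.multiaffine.partialDiff l]
  exact hp.partialDiff_nonneg ha (hx.trans (le_add_single hs)) l

lemma partialDiff_le_mul_add_single (hp : IsRayleigh p) (ha : PosAbove p a) (hx : a ≤ x)
    {k u : κ} {c β : ℝ} (hc : 0 ≤ c) (h : ∂[u] p x ≤ β * p x) :
    ∂[u] p (x + Pi.single k c) ≤ β * p (x + Pi.single k c) := by
  rw [hp.multiaffine.partialDiff, hp.multiaffine]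
  have h_diff : ∂[k] (∂[u] p) x ≤ β * ∂[k] p x := by
    refine le_of_mul_le_mul_left ?_ (ha x hx)
    calc p x * ∂[k] (∂[u] p) x ≤ ∂[u] p x * ∂[k] p x := hp.mul_partialDiff_le x u k
      _ ≤ β * p x * ∂[k] p x := mul_le_mul_of_nonneg_right h (hp.partialDiff_nonneg ha hx k)
      _ = p x * (β * ∂[k] p x) := by ring
  linarith [mul_le_mul_of_nonneg_left h_diff hc]

lemma wronskian_diagonal_nonneg (hp : IsRayleigh p) (x : κ → ℝ) (y z u : κ) (s : ℝ) :
    0 ≤ (∂[y] (∂[z] p) x * (∂[y] (∂[u] p) x + ∂[z] (∂[u] p) x) -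
          (∂[y] p x + ∂[z] p x) * ∂[y] (∂[z] (∂[u] p)) x) * (s * s) +
        2 * (∂[y] (∂[z] p) x * ∂[u] p x - ∂[y] (∂[z] (∂[u] p)) x * p x) * s +
        ((∂[y] p x + ∂[z] p x) * ∂[u] p x - (∂[y] (∂[u] p) x + ∂[z] (∂[u] p) x) * p x) := by
  have hp' := hp.multiaffine
  have h_y := hp.mul_partialDiff_le (x + Pi.single y s + Pi.single z s) u y
  have h_z := hp.mul_partialDiff_le (x + Pi.single y s + Pi.single z s) u z
  rw [(hp'.partialDiff u).partialDiff_left_apply_add_singles,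
    hp'.partialDiff_left_apply_add_singles] at h_y
  rw [(hp'.partialDiff u).partialDiff_right_apply_add_singles,
    hp'.partialDiff_right_apply_add_singles] at h_z
  rw [hp'.apply_add_singles, (hp'.partialDiff u).apply_add_singles] at h_y h_z
  linear_combination h_y + h_z

variable [Finite κ]

lemma partialDiff_le_mul_of_le (hp : IsRayleigh p) (ha : PosAbove p a) (hx : a ≤ x) {u : κ}
    {β : ℝ} (h : ∂[u] p a ≤ β * p a) : ∂[u] p x ≤ β * p x := by
  cases nonempty_fintype κ
  suffices h_partial : ∀ s : Finset κ, ∂[u] p (s.piecewise x a) ≤ β * p (s.piecewise x a) by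
    simpa using h_partial Finset.univ
  intro s
  induction s using Finset.induction_on with
  | empty => simpa using h
  | insert k s hk ih =>
    have h_step : (insert k s).piecewise x a = s.piecewise x a + Pi.single k (x k - a k) := by
      ext i
      obtain rfl | hi := eq_or_ne i k
      · simp [hk]
      · simp [Finset.piecewise, hi]
    rw [h_step]
    exact hp.partialDiff_le_mul_add_single ha (s.le_piecewise_of_le_of_le hx le_rfl)
      (sub_nonneg.2 (hx k)) ih

variable {y z : κ} {η : ℝ}

lemma posAbove_meanShift (hp : IsRayleigh p) (ha : PosAbove p a) (hη : η < 2)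
    (hy : ∂[y] p a ≤ η / 2 * p a) (hz : ∂[z] p a ≤ η / 2 * p a) :
    PosAbove (meanShift y z p) a := by
  intro x hx
  have hy' := hp.partialDiff_le_mul_of_le ha hx hy
  have hz' := hp.partialDiff_le_mul_of_le ha hx hz
  rw [hp.multiaffine.meanShift_apply]
  have := mul_lt_mul_of_pos_right hη (ha x hx)
  linarith

/-- The barrier argument: averaging the shifts in `y` and `z` costs only a move of `a` by
`1/2 + η` in these two coordinates, and no barrier `∂ᵤp / p` gets larger. -/
lemma partialDiff_meanShift_le (hp : IsRayleigh p) (ha : PosAbove p a) (hη : 0 ≤ η)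
    (hη' : η ≤ 1 / 2) (hy : ∂[y] p a ≤ η / 2 * p a) (hz : ∂[z] p a ≤ η / 2 * p a) {u : κ} {β : ℝ}
    (hu : ∂[u] p a ≤ β * p a) :
    ∂[u] (meanShift y z p) (a + Pi.single y (1 / 2 + η) + Pi.single z (1 / 2 + η)) ≤
      β * meanShift y z p (a + Pi.single y (1 / 2 + η) + Pi.single z (1 / 2 + η)) := by
  set b := a + Pi.single y (1 / 2 + η) + Pi.single z (1 / 2 + η) with hb
  have hab : a ≤ b := (le_add_single (by linarith)).trans (le_add_single (by linarith))
  have hba : b + Pi.single y (-(1 / 2 + η)) + Pi.single z (-(1 / 2 + η)) = a := by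
    simp only [hb, Pi.single_neg]
    abel
  have hp' := hp.multiaffine
  have h_pos : 0 < meanShift y z p b := hp.posAbove_meanShift ha (by linarith) hy hz b hab
  have h_sum : ∂[y] p b + ∂[z] p b ≤ η * p b := by
    linarith [hp.partialDiff_le_mul_of_le ha hab hy, hp.partialDiff_le_mul_of_le ha hab hz]
  have h_line := diagonal_line_inequality hη hη' (ha b hab)
    (hp.partialDiff_partialDiff_nonneg ha hab y z) h_sum (hp.wronskian_diagonal_nonneg b y z u)
  rw [← hp'.apply_add_singles, ← (hp'.partialDiff u).apply_add_singles, hba,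
    ← hp'.meanShift_apply, ← (hp'.partialDiff u).meanShift_apply,
    ← partialDiff_meanShift] at h_line
  refine le_of_mul_le_mul_right ?_ (ha a le_rfl)
  calc ∂[u] (meanShift y z p) b * p a ≤ ∂[u] p a * meanShift y z p b := h_line
    _ ≤ β * p a * meanShift y z p b := mul_le_mul_of_nonneg_right hu h_pos.le
    _ = β * meanShift y z p b * p a := by ring

end IsRayleigh

end Rayleigh

section Stable

open scoped ComplexConjugate

variable {κ : Type*} [DecidableEq κ]

/-- `f` is a multi-affine real stable function, `p` is its restriction to real arguments, and `p` is
positive for large arguments. Stability means that `f` has no zeros with all coordinates in the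
open upper half-plane. -/
structure IsStableMultiaffine [Fintype κ] (p : (κ → ℝ) → ℝ) (f : (κ → ℂ) → ℂ) : Prop where
  differentiable : Differentiable ℂ f
  multiaffine : IsMultiaffine f
  apply_ofReal : ∀ x : κ → ℝ, f (Complex.ofReal ∘ x) = p x
  ne_zero : ∀ z : κ → ℂ, (∀ k, 0 < (z k).im) → f z ≠ 0
  exists_posAbove : ∃ L : ℝ, PosAbove p fun _ ↦ L

lemma ofReal_comp_add_single (x : κ → ℝ) (k : κ) (c : ℝ) :
    Complex.ofReal ∘ (x + Pi.single k c) = Complex.ofReal ∘ x + Pi.single k (c : ℂ) := by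
  ext i
  obtain rfl | hi := eq_or_ne i k <;> simp [*]

lemma im_single_nonneg {c : ℂ} (hc : 0 ≤ c.im) (k i : κ) : 0 ≤ ((Pi.single k c : κ → ℂ) i).im := by
  obtain rfl | hi := eq_or_ne i k <;> simp [*]

lemma partialDiff_ofReal_comp {p : (κ → ℝ) → ℝ} {f : (κ → ℂ) → ℂ}
    (h : ∀ x : κ → ℝ, f (Complex.ofReal ∘ x) = p x) (k : κ) (x : κ → ℝ) :
    ∂[k] f (Complex.ofReal ∘ x) = ∂[k] p x := by
  have h_step := ofReal_comp_add_single x k 1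
  rw [Complex.ofReal_one] at h_step
  rw [partialDiff_apply, partialDiff_apply, ← h_step, h, h, Complex.ofReal_sub]

lemma shift_ofReal_comp {p : (κ → ℝ) → ℝ} {f : (κ → ℂ) → ℂ}
    (h : ∀ x : κ → ℝ, f (Complex.ofReal ∘ x) = p x) (k : κ) (x : κ → ℝ) :
    shift k f (Complex.ofReal ∘ x) = shift k p x := by
  rw [shift, shift, ← h, sub_eq_add_neg x, ← Pi.single_neg, ofReal_comp_add_single,
    Complex.ofReal_neg, Complex.ofReal_one, Pi.single_neg, ← sub_eq_add_neg]

lemma im_add_I_mul_mul_conj (a b c d : ℝ) :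
    ((a + Complex.I * b) * conj (c + Complex.I * d : ℂ)).im = b * c - a * d := by
  simp only [map_add, map_mul, Complex.conj_ofReal, Complex.conj_I, Complex.mul_im, Complex.add_re,
    Complex.add_im, Complex.mul_re, Complex.neg_re, Complex.neg_im, Complex.I_re, Complex.I_im,
    Complex.ofReal_re, Complex.ofReal_im]
  ring

namespace IsStableMultiaffine

variable [Fintype κ] {p : (κ → ℝ) → ℝ} {f : (κ → ℂ) → ℂ} {z : κ → ℂ}

/-- Otherwise the zero `c = -f z / ∂ₖf z` of the affine function `c ↦ f (z + c eₖ)` would give a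
zero of `f` in the upper half-plane. -/
lemma im_partialDiff_mul_conj_neg (h : IsStableMultiaffine p f) (hz : ∀ k, 0 < (z k).im) {k : κ}
    (hk : ∂[k] f z ≠ 0) : (∂[k] f z * conj (f z)).im < 0 := by
  by_contra! h_nonneg
  have h_root : 0 ≤ (-f z / ∂[k] f z).im := by
    rw [Complex.div_im, ← sub_div]
    refine div_nonneg ?_ (Complex.normSq_nonneg _)
    simp only [Complex.mul_im, Complex.conj_re, Complex.conj_im, Complex.neg_re,
      Complex.neg_im] at h_nonneg ⊢
    linarith
  refine h.ne_zero (z + Pi.single k (-f z / ∂[k] f z)) (fun i ↦ ?_) ?_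
  · exact add_pos_of_pos_of_nonneg (hz i) (im_single_nonneg h_root k i)
  · rw [h.multiaffine, div_mul_cancel₀ _ hk, add_neg_cancel]

lemma im_partialDiff_mul_conj_nonpos (h : IsStableMultiaffine p f) (hz : ∀ k, 0 < (z k).im)
    (k : κ) : (∂[k] f z * conj (f z)).im ≤ 0 := by
  obtain hk | hk := eq_or_ne (∂[k] f z) 0
  · simp [hk]
  · exact (h.im_partialDiff_mul_conj_neg hz hk).le

lemma im_partialDiff_mul_conj_nonpos_of_nonneg (h : IsStableMultiaffine p f)
    (hz : ∀ k, 0 ≤ (z k).im) (k : κ) : (∂[k] f z * conj (f z)).im ≤ 0 := by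
  have hf : Continuous f := h.differentiable.continuous
  have h_cont : Continuous fun t : ℝ ↦
      (∂[k] f (z + fun _ ↦ t * Complex.I) * conj (f (z + fun _ ↦ t * Complex.I))).im := by
    simp only [partialDiff_apply]
    fun_prop
  have h_lim := h_cont.continuousWithinAt (s := Set.Ioi 0) (x := 0)
  have h_nonpos := le_of_tendsto h_lim (b := 0) <| by
    filter_upwards [self_mem_nhdsWithin] with t ht
    refine h.im_partialDiff_mul_conj_nonpos (fun i ↦ ?_) k
    simpa using add_pos_of_nonneg_of_pos (hz i) ht
  have h_zero : (z + fun _ ↦ ((0 : ℝ) : ℂ) * Complex.I) = z := by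
    ext
    simp
  simpa only [h_zero] using h_nonpos

lemma isRayleigh (h : IsStableMultiaffine p f) : IsRayleigh p := by
  have hp : IsMultiaffine p := by
    intro x k c
    have h_aff := h.multiaffine (Complex.ofReal ∘ x) k c
    rw [partialDiff_ofReal_comp h.apply_ofReal, ← ofReal_comp_add_single, h.apply_ofReal,
      h.apply_ofReal] at h_aff
    exact_mod_cast h_aff
  refine ⟨hp, fun x i j ↦ ?_⟩
  have h_nonneg (k : κ) : 0 ≤ ((Complex.ofReal ∘ x + Pi.single j Complex.I : κ → ℂ) k).im := by
    simpa using im_single_nonneg (c := Complex.I) (by simp) j k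
  have h_im := h.im_partialDiff_mul_conj_nonpos_of_nonneg h_nonneg i
  rw [h.multiaffine.partialDiff i, h.multiaffine, h.apply_ofReal,
    partialDiff_ofReal_comp h.apply_ofReal,
    partialDiff_ofReal_comp (partialDiff_ofReal_comp h.apply_ofReal i),
    partialDiff_ofReal_comp h.apply_ofReal, im_add_I_mul_mul_conj] at h_im
  linarith

protected lemma shift (h : IsStableMultiaffine p f) (k : κ) :
    IsStableMultiaffine (shift k p) (shift k f) where
  differentiable := h.differentiable.comp (differentiable_id.sub_const _)
  multiaffine := h.multiaffine.shift k
  apply_ofReal := shift_ofReal_comp h.apply_ofReal k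
  ne_zero z hz := h.ne_zero _ fun i ↦ by
    obtain rfl | hi := eq_or_ne i k <;> simp [*]
  exists_posAbove := by
    obtain ⟨L, hL⟩ := h.exists_posAbove
    refine ⟨L + 1, fun x hx ↦ hL _ ?_⟩
    have h_one : (Pi.single k 1 : κ → ℝ) ≤ 1 := update_le_iff.2 (by simp)
    exact fun i ↦ le_sub_iff_add_le.2 ((add_le_add_right (h_one i) L).trans (hx i))

/-- At a zero of the average, `∂ₖf + ∂ₗf = 2f`, so the two nonpositive imaginary parts of
`∂f · conj f` add up to zero. -/
lemma meanShift_ne_zero (h : IsStableMultiaffine p f) (k l : κ) (hz : ∀ k, 0 < (z k).im) :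
    meanShift k l f z ≠ 0 := by
  intro h_zero
  rw [h.multiaffine.meanShift_apply, sub_eq_zero, eq_div_iff two_ne_zero] at h_zero
  have h_im : (∂[k] f z * conj (f z)).im + (∂[l] f z * conj (f z)).im = 0 := by
    rw [← Complex.add_im, ← add_mul, ← h_zero, mul_right_comm, Complex.mul_conj]
    simp
  have hk := h.im_partialDiff_mul_conj_nonpos hz k
  have hl := h.im_partialDiff_mul_conj_nonpos hz l
  have hk_zero : ∂[k] f z = 0 := by
    by_contra hk'
    linarith [h.im_partialDiff_mul_conj_neg hz hk']
  have hl_zero : ∂[l] f z = 0 := by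
    by_contra hl'
    linarith [h.im_partialDiff_mul_conj_neg hz hl']
  exact h.ne_zero z hz (by simpa [hk_zero, hl_zero] using h_zero)

protected lemma meanShift (h : IsStableMultiaffine p f) (k l : κ) :
    IsStableMultiaffine (meanShift k l p) (meanShift k l f) where
  differentiable := by
    have hk := (h.shift k).differentiable
    have hl := (h.shift l).differentiable
    unfold meanShift
    fun_prop
  multiaffine := h.multiaffine.meanShift k l
  apply_ofReal x := by
    simp [meanShift, (h.shift k).apply_ofReal, (h.shift l).apply_ofReal]
  ne_zero _ hz := h.meanShift_ne_zero k l hz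
  exists_posAbove := by
    obtain ⟨L, hL⟩ := (h.shift k).exists_posAbove
    obtain ⟨L', hL'⟩ := (h.shift l).exists_posAbove
    refine ⟨max L L', fun x hx ↦ half_pos (add_pos (hL x ?_) (hL' x ?_))⟩
    · exact fun i ↦ (le_max_left _ _).trans (hx i)
    · exact fun i ↦ (le_max_right _ _).trans (hx i)

end IsStableMultiaffine

end Stable

section Interlacing

open scoped ComplexConjugate Topology
open Filter Set

/-- `g` interlaces `h`, expressed through the sign of the Wronskian: `g / h` is decreasing wherever
`h` is nonzero. -/
structure Interlaces (g h : ℝ → ℝ) : Prop where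
  differentiable_left : Differentiable ℝ g
  differentiable_right : Differentiable ℝ h
  wronskian_nonpos : ∀ x, deriv g x * h x - g x * deriv h x ≤ 0

variable {g g₁ g₂ h : ℝ → ℝ}

lemma Interlaces.antitoneOn_div (hgh : Interlaces g h) {D : Set ℝ} (hD : Convex ℝ D)
    (h_pos : ∀ x ∈ D, 0 < h x) : AntitoneOn (g / h) D := by
  have hg := hgh.differentiable_left
  have hh := hgh.differentiable_right
  refine antitoneOn_of_deriv_nonpos hD ?_ (fun x hx ↦ ?_) fun x hx ↦ ?_
  · exact hg.continuous.continuousOn.div hh.continuous.continuousOn fun x hx ↦ (h_pos x hx).ne'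
  · exact ((hg x).div (hh x) (h_pos x (interior_subset hx)).ne').differentiableWithinAt
  · rw [deriv_div (hg x) (hh x) (h_pos x (interior_subset hx)).ne']
    exact div_nonpos_of_nonpos_of_nonneg (hgh.wronskian_nonpos x) (sq_nonneg _)

lemma Interlaces.nonneg_of_forall_gt_pos (hgh : Interlaces g h) {ρ : ℝ} (h_zero : h ρ = 0)
    (h_pos : ∀ x ∈ Ioi ρ, 0 < h x) : 0 ≤ g ρ := by
  set c := g (ρ + 1) / h (ρ + 1)
  have h_cont : Continuous fun x ↦ g x - c * h x :=
    hgh.differentiable_left.continuous.sub (hgh.differentiable_right.continuous.const_mul c)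
  have h_nonneg : 0 ≤ g ρ - c * h ρ := by
    refine ge_of_tendsto (h_cont.continuousWithinAt (s := Ioi ρ)) ?_
    filter_upwards [Ioo_mem_nhdsGT (lt_add_one ρ)] with x hx
    have h_le : c ≤ g x / h x :=
      hgh.antitoneOn_div (convex_Ioi ρ) h_pos hx.1 (lt_add_one ρ) hx.2.le
    rw [le_div_iff₀ (h_pos x hx.1)] at h_le
    linarith
  rwa [h_zero, mul_zero, sub_zero] at h_nonneg

lemma exists_last_zero {L x₀ : ℝ} (hh : Continuous h) (h_pos : ∀ x, L ≤ x → 0 < h x)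
    (hx₀ : h x₀ ≤ 0) : ∃ ρ, x₀ ≤ ρ ∧ h ρ = 0 ∧ ∀ x ∈ Ioi ρ, 0 < h x := by
  have h_bdd : BddAbove {x | h x ≤ 0} :=
    ⟨L, fun x hx ↦ le_of_not_ge fun hLx ↦ (h_pos x hLx).not_ge hx⟩
  have h_closed : IsClosed {x | h x ≤ 0} := isClosed_le hh continuous_const
  have h_gt : ∀ x ∈ Ioi (sSup {x | h x ≤ 0}), 0 < h x :=
    fun x hx ↦ not_le.1 fun hx' ↦ (notMem_of_csSup_lt hx h_bdd) hx'
  refine ⟨sSup {x | h x ≤ 0}, le_csSup h_bdd hx₀, le_antisymm ?_ ?_, h_gt⟩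
  · exact h_closed.csSup_mem ⟨x₀, hx₀⟩ h_bdd
  · refine ge_of_tendsto (hh.continuousWithinAt (s := Ioi (sSup {x | h x ≤ 0}))) ?_
    filter_upwards [self_mem_nhdsWithin] with x hx using (h_gt x hx).le

lemma Interlaces.lt_of_le (hgh : Interlaces g h) {r : ℝ} (h_pos : ∀ x ∈ Ici r, 0 < h x)
    (h_lt : g r < h r) {x : ℝ} (hx : r ≤ x) : g x < h x := by
  have h_anti : g x / h x ≤ g r / h r :=
    hgh.antitoneOn_div (convex_Ici r) h_pos self_mem_Ici hx hx
  rw [← div_lt_one (h_pos x hx)]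
  exact h_anti.trans_lt ((div_lt_one (h_pos r self_mem_Ici)).2 h_lt)

/-- With a common interlacer, the largest zero of one of `h - g₁`, `h - g₂` is at most the largest
zero of their average. -/
lemma Interlaces.forall_lt_or_forall_lt (hg₁ : Interlaces g₁ h) (hg₂ : Interlaces g₂ h) {L r : ℝ}
    (h_pos : ∀ x, L ≤ x → 0 < h x) (h_mean : ∀ x, r ≤ x → 0 < h x - (g₁ x + g₂ x) / 2) :
    (∀ x, r ≤ x → g₁ x < h x) ∨ ∀ x, r ≤ x → g₂ x < h x := by
  have h_pos' : ∀ x ∈ Ici r, 0 < h x := by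
    by_contra! ⟨x, hx, hx_nonpos⟩
    obtain ⟨ρ, hxρ, hρ_zero, hρ_pos⟩ :=
      exists_last_zero hg₁.differentiable_right.continuous h_pos hx_nonpos
    linarith [h_mean ρ (le_trans hx hxρ), hg₁.nonneg_of_forall_gt_pos hρ_zero hρ_pos,
      hg₂.nonneg_of_forall_gt_pos hρ_zero hρ_pos]
  have h_mean_r := h_mean r le_rfl
  rcases lt_or_ge (g₁ r) (h r) with h_lt | h_ge
  · exact .inl fun x ↦ hg₁.lt_of_le h_pos' h_lt
  · exact .inr fun x ↦ hg₂.lt_of_le h_pos' (by linarith)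

lemma hasDerivAt_nonpos_of_forall_pos {m : ℝ → ℝ} {m' : ℝ} (hm : HasDerivAt m m' 0)
    (h_zero : m 0 = 0) (h_nonpos : ∀ t, 0 < t → m t ≤ 0) : m' ≤ 0 := by
  refine le_of_tendsto hm.tendsto_slope_zero_right ?_
  filter_upwards [self_mem_nhdsWithin] with t ht
  rw [zero_add, h_zero, sub_zero, smul_eq_mul]
  exact mul_nonpos_of_nonneg_of_nonpos (inv_nonneg.2 (le_of_lt ht)) (h_nonpos t ht)

lemma hasDerivAt_comp_add_mul_I {F : ℂ → ℂ} (hF : Differentiable ℂ F) (x : ℂ) :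
    HasDerivAt (fun t : ℝ ↦ F (x + t * Complex.I)) (deriv F x * Complex.I) 0 := by
  have h_line : HasDerivAt (fun t : ℝ ↦ x + t * Complex.I) Complex.I 0 := by
    simpa using ((hasDerivAt_id (0 : ℝ)).ofReal_comp.mul_const Complex.I).const_add x
  have hF' : HasDerivAt F (deriv F x) (x + (0 : ℝ) * Complex.I) := by
    simpa using (hF x).hasDerivAt
  exact hF'.comp (0 : ℝ) h_line

/-- The Wronskian at `x` is the derivative of `t ↦ Im (G conj H) (x + i t)` at `t = 0`. -/
lemma interlaces_of_im_mul_conj_nonpos {G H : ℂ → ℂ} (hG : Differentiable ℂ G)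
    (hH : Differentiable ℂ H) (hGg : ∀ x : ℝ, G x = g x) (hHh : ∀ x : ℝ, H x = h x)
    (h_im : ∀ z : ℂ, 0 < z.im → (G z * conj (H z)).im ≤ 0) : Interlaces g h := by
  have hg (x : ℝ) : HasDerivAt g (deriv G x).re x := by
    simpa only [hGg, Complex.ofReal_re] using (hG x).hasDerivAt.real_of_complex
  have hh (x : ℝ) : HasDerivAt h (deriv H x).re x := by
    simpa only [hHh, Complex.ofReal_re] using (hH x).hasDerivAt.real_of_complex
  refine ⟨fun x ↦ (hg x).differentiableAt, fun x ↦ (hh x).differentiableAt, fun x ↦ ?_⟩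
  have h_deriv := Complex.imCLM.hasFDerivAt.comp_hasDerivAt (0 : ℝ)
    ((hasDerivAt_comp_add_mul_I hG x).mul (hasDerivAt_comp_add_mul_I hH x).star)
  have h_nonpos := hasDerivAt_nonpos_of_forall_pos h_deriv (by simp [hGg, hHh])
    fun t ht ↦ h_im (x + t * Complex.I) (by simpa using ht)
  refine le_of_eq_of_le ?_ h_nonpos
  rw [(hg x).deriv, (hh x).deriv]
  simp [hGg, hHh, sub_eq_add_neg]

end Interlacing

section Selection

variable {κ : Type*} [DecidableEq κ] [Fintype κ] {p : (κ → ℝ) → ℝ} {f : (κ → ℂ) → ℂ}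

lemma IsStableMultiaffine.interlaces_partialDiff (h : IsStableMultiaffine p f) (k : κ) :
    Interlaces (fun x ↦ ∂[k] p fun _ ↦ x) fun x ↦ p fun _ ↦ x := by
  have hf := h.differentiable
  refine interlaces_of_im_mul_conj_nonpos (G := fun z ↦ ∂[k] f fun _ ↦ z)
    (H := fun z ↦ f fun _ ↦ z) ?_ (by fun_prop) (fun x ↦ ?_) (fun x ↦ ?_) fun z hz ↦ ?_
  · simp only [partialDiff_apply]
    fun_prop
  · exact partialDiff_ofReal_comp h.apply_ofReal k fun _ ↦ x
  · exact h.apply_ofReal fun _ ↦ x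
  · exact h.im_partialDiff_mul_conj_nonpos (fun _ ↦ hz) k

lemma IsStableMultiaffine.forall_shift_pos_or_forall_shift_pos (h : IsStableMultiaffine p f)
    (k l : κ) {r : ℝ} (h_mean : ∀ x, r ≤ x → 0 < meanShift k l p fun _ ↦ x) :
    (∀ x, r ≤ x → 0 < shift k p fun _ ↦ x) ∨ ∀ x, r ≤ x → 0 < shift l p fun _ ↦ x := by
  obtain ⟨L, hL⟩ := h.exists_posAbove
  have hp := h.isRayleigh.multiaffine
  simp only [hp.shift_apply, hp.meanShift_apply, sub_pos] at h_mean ⊢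
  exact (h.interlaces_partialDiff k).forall_lt_or_forall_lt (h.interlaces_partialDiff l)
    (fun x hx ↦ hL _ fun _ ↦ hx) fun x hx ↦ sub_pos.2 (h_mean x hx)

end Selection

section PairedSelection

variable {ι : Type*} [DecidableEq ι]

/-- The composition over `i ∈ l` of the averages of the shifts in the coordinates `(i, true)` and
`(i, false)`: the mean of the shifts of `p` over all choices of one coordinate from each pair. -/
def pairedMeanShift {R : Type*} [Field R] (l : List ι) (p : (ι × Bool → R) → R) :
    (ι × Bool → R) → R :=
  l.foldr (fun i ↦ meanShift (i, true) (i, false)) p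

lemma shift_pairedMeanShift {R : Type*} [Field R] (k : ι × Bool) (l : List ι)
    (p : (ι × Bool → R) → R) :
    shift k (pairedMeanShift l p) = pairedMeanShift l (shift k p) := by
  induction l with
  | nil => rfl
  | cons i l ih => exact (shift_meanShift _ _ _ _).trans (congrArg _ ih)

namespace IsStableMultiaffine

variable [Fintype ι] {p : (ι × Bool → ℝ) → ℝ} {f : (ι × Bool → ℂ) → ℂ} {x₀ η r : ℝ}

protected lemma pairedMeanShift (h : IsStableMultiaffine p f) (l : List ι) :
    IsStableMultiaffine (pairedMeanShift l p) (pairedMeanShift l f) := by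
  induction l with
  | nil => exact h
  | cons i l ih => exact ih.meanShift _ _

lemma exists_choice_forall_pos {l : List ι} (hl : l.Nodup) (h : IsStableMultiaffine p f)
    (h_mean : ∀ x, r ≤ x → 0 < pairedMeanShift l p fun _ ↦ x) :
    ∃ s : ι → Bool, ∀ x, r ≤ x → 0 < p fun k ↦ x - if k.1 ∈ l ∧ k.2 = s k.1 then 1 else 0 := by
  induction l generalizing p f with
  | nil => exact ⟨fun _ ↦ true, by simpa [pairedMeanShift] using h_mean⟩
  | cons i l ih =>
    obtain ⟨hil, hl⟩ := List.nodup_cons.1 hl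
    have h_choice : ∃ b, ∀ x, r ≤ x → 0 < shift (i, b) (pairedMeanShift l p) fun _ ↦ x := by
      obtain h_true | h_false :=
        (h.pairedMeanShift l).forall_shift_pos_or_forall_shift_pos (i, true) (i, false) h_mean
      exacts [⟨true, h_true⟩, ⟨false, h_false⟩]
    obtain ⟨b, hb⟩ := h_choice
    rw [shift_pairedMeanShift] at hb
    obtain ⟨s, hs⟩ := ih hl (h.shift (i, b)) hb
    refine ⟨Function.update s i b, fun x hx ↦ (hs x hx).trans_eq (congrArg p ?_)⟩
    ext ⟨j, c⟩
    obtain rfl | hj := eq_or_ne j i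
    · simp [hil, Pi.single_apply]
    · simp [hj]

lemma barrier_pairedMeanShift (h : IsStableMultiaffine p f) (hη : 0 ≤ η) (hη' : η ≤ 1 / 2)
    (h_pos : PosAbove p fun _ ↦ x₀) (h_bar : ∀ k, ∂[k] p (fun _ ↦ x₀) ≤ η / 2 * p fun _ ↦ x₀)
    {l : List ι} (hl : l.Nodup) :
    PosAbove (pairedMeanShift l p) (fun k ↦ x₀ + if k.1 ∈ l then 1 / 2 + η else 0) ∧
      ∀ k, ∂[k] (pairedMeanShift l p) (fun k ↦ x₀ + if k.1 ∈ l then 1 / 2 + η else 0) ≤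
        η / 2 * pairedMeanShift l p fun k ↦ x₀ + if k.1 ∈ l then 1 / 2 + η else 0 := by
  induction l with
  | nil => simpa only [pairedMeanShift, List.foldr_nil, List.not_mem_nil, if_false, add_zero] using
      ⟨h_pos, h_bar⟩
  | cons i l ih =>
    obtain ⟨hil, hl⟩ := List.nodup_cons.1 hl
    obtain ⟨ih_pos, ih_bar⟩ := ih hl
    have h_move : (fun k : ι × Bool ↦ x₀ + if k.1 ∈ i :: l then 1 / 2 + η else 0) =
        (fun k ↦ x₀ + if k.1 ∈ l then 1 / 2 + η else 0) + Pi.single (i, true) (1 / 2 + η) +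
          Pi.single (i, false) (1 / 2 + η) := by
      ext ⟨j, c⟩
      obtain rfl | hj := eq_or_ne j i
      · cases c <;> simp [hil]
      · simp [hj]
    have h_ray := (h.pairedMeanShift l).isRayleigh
    rw [h_move]
    refine ⟨fun x hx ↦ ?_, fun k ↦ ?_⟩
    · refine h_ray.posAbove_meanShift ih_pos (by linarith) (ih_bar _) (ih_bar _) x (le_trans ?_ hx)
      exact (le_add_single (by linarith)).trans (le_add_single (by linarith))
    · exact h_ray.partialDiff_meanShift_le ih_pos hη hη' (ih_bar _) (ih_bar _) (ih_bar k)

lemma exists_choice_forall_pos_of_barrier (h : IsStableMultiaffine p f) (hη : 0 ≤ η)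
    (hη' : η ≤ 1 / 2) (h_pos : PosAbove p fun _ ↦ x₀)
    (h_bar : ∀ k, ∂[k] p (fun _ ↦ x₀) ≤ η / 2 * p fun _ ↦ x₀) :
    ∃ s : ι → Bool, ∀ x, x₀ + 1 / 2 + η ≤ x →
      0 < p fun k ↦ x - if k.2 = s k.1 then 1 else 0 := by
  have h_nodup := Finset.nodup_toList (Finset.univ : Finset ι)
  have h_mean := (h.barrier_pairedMeanShift hη hη' h_pos h_bar h_nodup).1
  simpa using h.exists_choice_forall_pos h_nodup (r := x₀ + 1 / 2 + η) fun x hx ↦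
    h_mean _ fun k ↦ by simpa [← add_assoc] using hx

end IsStableMultiaffine

end PairedSelection

section Determinant

open Matrix

variable {n ι R : Type*} [CommRing R]

/-- Bordering `A` by `v` below and `-c • u` on the right turns the dependence on `c` into the
linear dependence of a determinant on one of its columns. -/
lemma det_add_smul_vecMulVec [Fintype n] [DecidableEq n] (A : Matrix n n R) (u v : n → R)
    (c : R) : (A + c • vecMulVec u v).det = A.det + c * ((A + vecMulVec u v).det - A.det) := by
  let bordered (w : n ⊕ Unit → R) : R :=
    ((fromBlocks A 0 (replicateRow Unit v) 1).updateCol (Sum.inr ()) w).det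
  have h_bordered (c : R) : (A + c • vecMulVec u v).det = bordered (Sum.elim (c • -u) 1) := by
    have h_det := det_fromBlocks_one₂₂ A (c • -replicateCol Unit u) (replicateRow Unit v)
    rw [smul_neg, sub_eq_add_neg, Matrix.neg_mul, neg_neg, smul_mul, ← vecMulVec_eq] at h_det
    rw [← h_det]
    congr 1
    ext (i | i) (j | j) <;> simp
  have h_split (c : R) : bordered (Sum.elim (c • -u) 1) =
      bordered (Sum.elim 0 1) + c * bordered (Sum.elim (-u) 0) := by
    rw [← det_updateCol_smul, ← det_updateCol_add]
    congr 2
    ext (i | i) <;> simp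
  have h_zero := h_bordered 0
  have h_one := h_bordered 1
  rw [h_split, zero_smul, add_zero, zero_mul, add_zero] at h_zero
  rw [h_split, one_smul, one_mul] at h_one
  rw [h_bordered, h_split, h_one, h_zero]
  ring

lemma eq_zero_of_map_ofReal_mulVec_eq_zero [Fintype n] {U : Matrix ι n ℝ}
    (hU : Function.Injective U.mulVec) {v : n → ℂ} (hv : U.map Complex.ofReal *ᵥ v = 0) :
    v = 0 := by
  have h_re : Complex.re ∘ v = 0 := hU <| funext fun i ↦ by
    simpa [mulVec, dotProduct] using congrArg Complex.re (congrFun hv i)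
  have h_im : Complex.im ∘ v = 0 := hU <| funext fun i ↦ by
    simpa [mulVec, dotProduct] using congrArg Complex.im (congrFun hv i)
  exact funext fun a ↦ Complex.ext (congrFun h_re a) (congrFun h_im a)

variable [Fintype ι] [DecidableEq ι]

/-- The matrix `∑ i, z i • uᵢ uᵢᵀ`, where `uᵢ` are the rows of `U`. -/
def weightedGram (U : Matrix ι n R) (z : ι → R) : Matrix n n R :=
  Uᵀ * diagonal z * U

lemma weightedGram_apply (U : Matrix ι n R) (z : ι → R) (a b : n) :
    weightedGram U z a b = ∑ i, z i * (U i a * U i b) := by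
  simp only [weightedGram, mul_apply (N := U), mul_diagonal, transpose_apply, mul_assoc,
    mul_left_comm (z _)]

lemma weightedGram_add_single (U : Matrix ι n R) (z : ι → R) (i : ι) (c : R) :
    weightedGram U (z + Pi.single i c) = weightedGram U z + c • vecMulVec (U.row i) (U.row i) := by
  ext a b
  simp [weightedGram_apply, add_mul, Finset.sum_add_distrib, Pi.single_apply, vecMulVec_apply]

lemma weightedGram_map {S : Type*} [CommRing S] (φ : R →+* S) (U : Matrix ι n R) (z : ι → R) :
    weightedGram (U.map φ) (φ ∘ z) = (weightedGram U z).map φ := by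
  ext a b
  simp [weightedGram_apply]

lemma isHermitian_weightedGram (U : Matrix ι n ℝ) (z : ι → ℝ) : (weightedGram U z).IsHermitian := by
  have h := isHermitian_conjTranspose_mul_mul U (isHermitian_diagonal z)
  rwa [conjTranspose_eq_transpose_of_trivial] at h

variable [Fintype n]

lemma dotProduct_weightedGram_mulVec (U : Matrix ι n R) (z : ι → R) (x y : n → R) :
    x ⬝ᵥ weightedGram U z *ᵥ y = ∑ i, z i * ((U *ᵥ x) i * (U *ᵥ y) i) := by
  rw [weightedGram, ← mulVec_mulVec, ← mulVec_mulVec, dotProduct_mulVec, vecMul_transpose]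
  simp only [dotProduct, mulVec_diagonal, mul_left_comm]

lemma weightedGram_posDef {U : Matrix ι n ℝ} (hU : Function.Injective U.mulVec) {z : ι → ℝ}
    (hz : ∀ i, 0 < z i) : (weightedGram U z).PosDef := by
  have h := (posDef_diagonal_iff.2 hz).conjTranspose_mul_mul_same hU
  rwa [conjTranspose_eq_transpose_of_trivial] at h

variable [DecidableEq n]

lemma det_weightedGram_map_ofReal_ne_zero {U : Matrix ι n ℝ} (hU : Function.Injective U.mulVec)
    {z : ι → ℂ} (hz : ∀ i, 0 < (z i).im) :
    (weightedGram (U.map Complex.ofReal) z).det ≠ 0 := by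
  intro h_det
  obtain ⟨v, hv, h_ker⟩ := exists_mulVec_eq_zero_iff.2 h_det
  have h_conj : U.map Complex.ofReal *ᵥ star v = star (U.map Complex.ofReal *ᵥ v) := by
    ext i
    simp [mulVec, dotProduct]
  have h_sum : ∑ i, (z i).im * Complex.normSq ((U.map Complex.ofReal *ᵥ v) i) = 0 := by
    have h_form := dotProduct_weightedGram_mulVec (U.map Complex.ofReal) z (star v) v
    rw [h_ker, dotProduct_zero, h_conj] at h_form
    simpa [← Complex.normSq_eq_conj_mul_self] using (congrArg Complex.im h_form).symm
  have h_nonneg (i : ι) (_ : i ∈ Finset.univ) :=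
    mul_nonneg (hz i).le (Complex.normSq_nonneg ((U.map Complex.ofReal *ᵥ v) i))
  refine hv (eq_zero_of_map_ofReal_mulVec_eq_zero hU (funext fun i ↦ ?_))
  have h_term := (Finset.sum_eq_zero_iff_of_nonneg h_nonneg).1 h_sum i (Finset.mem_univ i)
  exact Complex.normSq_eq_zero.1 ((mul_eq_zero.1 h_term).resolve_left (hz i).ne.symm)

/-- The product of the determinants of two copies of the weighted Gram matrix of `U` in independent
weights: choosing from each pair of variables `z (i, true)`, `z (i, false)` distributes the rows of
`U` among the two copies. -/
def pairedGramDet (U : Matrix ι n R) (z : ι × Bool → R) : R :=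
  ∏ b, (weightedGram U fun i ↦ z (i, b)).det

lemma pairedGramDet_eq_mul (U : Matrix ι n R) (z : ι × Bool → R) (b : Bool) :
    pairedGramDet U z =
      (weightedGram U fun i ↦ z (i, b)).det * (weightedGram U fun i ↦ z (i, !b)).det := by
  cases b <;> simp [pairedGramDet, mul_comm]

lemma pairedGramDet_add_single (U : Matrix ι n R) (z : ι × Bool → R) (i : ι) (b : Bool) (c : R) :
    pairedGramDet U (z + Pi.single (i, b) c) =
      (weightedGram U (fun j ↦ z (j, b)) + c • vecMulVec (U.row i) (U.row i)).det *
        (weightedGram U fun j ↦ z (j, !b)).det := by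
  rw [pairedGramDet_eq_mul U _ b, ← weightedGram_add_single]
  congr 4 <;> ext j <;> simp [Pi.single_apply]

lemma isMultiaffine_pairedGramDet (U : Matrix ι n R) : IsMultiaffine (pairedGramDet U) := by
  rintro z ⟨i, b⟩ c
  rw [partialDiff_apply, pairedGramDet_add_single, pairedGramDet_add_single, one_smul,
    det_add_smul_vecMulVec, pairedGramDet_eq_mul U z b]
  ring

lemma pairedGramDet_map {S : Type*} [CommRing S] (φ : R →+* S) (U : Matrix ι n R)
    (z : ι × Bool → R) : pairedGramDet (U.map φ) (φ ∘ z) = φ (pairedGramDet U z) := by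
  rw [pairedGramDet, pairedGramDet, map_prod]
  refine Finset.prod_congr rfl fun b _ ↦ ?_
  rw [RingHom.map_det, RingHom.mapMatrix_apply, ← weightedGram_map]
  rfl

lemma posAbove_pairedGramDet {U : Matrix ι n ℝ} (hU : Function.Injective U.mulVec) {x₀ : ℝ}
    (hx₀ : 0 < x₀) : PosAbove (pairedGramDet U) fun _ ↦ x₀ := fun _ hx ↦
  Finset.prod_pos fun b _ ↦ (weightedGram_posDef hU fun i ↦ hx₀.trans_le (hx (i, b))).det_pos

lemma isStableMultiaffine_pairedGramDet {U : Matrix ι n ℝ} (hU : Function.Injective U.mulVec) :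
    IsStableMultiaffine (pairedGramDet U) (pairedGramDet (U.map Complex.ofReal)) where
  differentiable := by
    unfold pairedGramDet
    simp only [det_apply, weightedGram_apply]
    fun_prop
  multiaffine := isMultiaffine_pairedGramDet _
  apply_ofReal := pairedGramDet_map Complex.ofRealHom U
  ne_zero _ hz := Finset.prod_ne_zero_iff.2 fun _ _ ↦
    det_weightedGram_map_ofReal_ne_zero hU fun _ ↦ hz _
  exists_posAbove := ⟨1, posAbove_pairedGramDet hU one_pos⟩

lemma det_weightedGram_add_vecMulVec_le {U : Matrix ι n ℝ} (hU : Function.Injective U.mulVec)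
    {x₀ ε : ℝ} (hx₀ : 0 < x₀) (hε : 0 ≤ ε) {i : ι}
    (hi : ∀ x, (U *ᵥ x) i ^ 2 ≤ ε * ∑ j, (U *ᵥ x) j ^ 2) :
    (weightedGram U (fun _ ↦ x₀) + vecMulVec (U.row i) (U.row i)).det ≤
      (1 + ε / x₀) * (weightedGram U fun _ ↦ x₀).det := by
  have h_pos := (weightedGram_posDef hU fun _ ↦ hx₀).det_pos
  set A := weightedGram U fun _ ↦ x₀ with hA
  set w := A⁻¹ *ᵥ U.row i with hw
  have h_det : (A + vecMulVec (U.row i) (U.row i)).det = A.det * (1 + (U *ᵥ w) i) := by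
    rw [vecMulVec_eq Unit, det_add_replicateCol_mul_replicateRow h_pos.ne'.isUnit, Matrix.mul_assoc,
      ← replicateCol_mulVec, det_unique (n := Unit)]
    rfl
  have h_form : (U *ᵥ w) i = x₀ * ∑ j, (U *ᵥ w) j ^ 2 := by
    have h_quad := dotProduct_weightedGram_mulVec U (fun _ ↦ x₀) w w
    rw [← hA, hw, mulVec_mulVec, mul_nonsing_inv _ h_pos.ne'.isUnit, one_mulVec, ← hw,
      dotProduct_comm, ← Finset.mul_sum] at h_quad
    simpa only [sq] using! h_quad
  have h_lev : (U *ᵥ w) i ≤ ε / x₀ := by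
    rw [le_div_iff₀ hx₀]
    by_contra! h_lt
    have h_sum : 0 < (U *ᵥ w) i := pos_of_mul_pos_left (hε.trans_lt h_lt) hx₀.le
    nlinarith [hi w]
  rw [h_det, mul_comm]
  gcongr

lemma partialDiff_pairedGramDet_le {U : Matrix ι n ℝ} (hU : Function.Injective U.mulVec)
    {x₀ ε : ℝ} (hx₀ : 0 < x₀) (hε : 0 ≤ ε)
    (h_lev : ∀ i x, (U *ᵥ x) i ^ 2 ≤ ε * ∑ j, (U *ᵥ x) j ^ 2) (k : ι × Bool) :
    ∂[k] (pairedGramDet U) (fun _ ↦ x₀) ≤ ε / x₀ * pairedGramDet U fun _ ↦ x₀ := by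
  obtain ⟨i, b⟩ := k
  have h_pos := (weightedGram_posDef hU fun _ ↦ hx₀).det_pos
  have h_step := mul_le_mul_of_nonneg_right
    (det_weightedGram_add_vecMulVec_le hU hx₀ hε (h_lev i)) h_pos.le
  rw [partialDiff_apply, pairedGramDet_add_single, one_smul, pairedGramDet_eq_mul U _ b]
  linarith

end Determinant

section Weaver

open Matrix

lemma exists_isMax_ratio {E : Type*} [NormedAddCommGroup E] [NormedSpace ℝ E]
    [FiniteDimensional ℝ E] [Nontrivial E] {f g : E → ℝ} (hf : Continuous f) (hg : Continuous g)
    (hf_smul : ∀ (c : ℝ) x, f (c • x) = c ^ 2 * f x)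
    (hg_smul : ∀ (c : ℝ) x, g (c • x) = c ^ 2 * g x) (hg_pos : ∀ x, x ≠ 0 → 0 < g x) :
    ∃ ρ, (∀ x, f x ≤ ρ * g x) ∧ ∃ z ≠ 0, f z = ρ * g z := by
  have := FiniteDimensional.proper_real E
  have h_sphere {x : E} (hx : x ∈ Metric.sphere (0 : E) 1) : 0 < g x :=
    hg_pos x (ne_zero_of_mem_unit_sphere ⟨x, hx⟩)
  obtain ⟨z, hz, h_max⟩ := (isCompact_sphere (0 : E) 1).exists_isMaxOn
    (NormedSpace.sphere_nonempty.2 zero_le_one)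
    (hf.continuousOn.div hg.continuousOn fun x hx ↦ (h_sphere hx).ne')
  refine ⟨f z / g z, fun x ↦ ?_, z, ne_zero_of_mem_unit_sphere ⟨z, hz⟩,
    (div_mul_cancel₀ _ (h_sphere hz).ne').symm⟩
  obtain rfl | hx := eq_or_ne x 0
  · have hf_zero := hf_smul 0 0
    have hg_zero := hg_smul 0 0
    simp_all
  · have h_le := h_max (a := ‖x‖⁻¹ • x) (by simp [norm_smul, hx])
    have h_inv : ‖x‖⁻¹ ^ 2 ≠ 0 := by simpa using hx
    simpa only [Set.mem_ofPred_eq, Pi.div_apply, hf_smul, hg_smul, mul_div_mul_left _ _ h_inv,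
      div_le_iff₀ (hg_pos x hx)] using h_le

variable {n ι : Type*} [Fintype n] [Fintype ι] {U : Matrix ι n ℝ}

lemma sum_sq_mulVec_pos (hU : Function.Injective U.mulVec) {x : n → ℝ} (hx : x ≠ 0) :
    0 < ∑ i, (U *ᵥ x) i ^ 2 := by
  have h_ne : U *ᵥ x ≠ 0 := (hU.ne_iff' (mulVec_zero U)).2 hx
  obtain ⟨i, hi⟩ := Function.ne_iff.1 h_ne
  exact Finset.sum_pos' (fun _ _ ↦ sq_nonneg _) ⟨i, Finset.mem_univ i, sq_pos_of_ne_zero hi⟩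

/-- At the largest generalized eigenvalue `ρ` of the two quadratic forms the matrix
`∑ i, (ρ - w i) uᵢ uᵢᵀ` is singular. -/
lemma sum_mul_sq_mulVec_le_of_det_ne_zero [DecidableEq n] [DecidableEq ι]
    (hU : Function.Injective U.mulVec) {w : ι → ℝ} {r : ℝ}
    (h_det : ∀ x, r ≤ x → (weightedGram U fun i ↦ x - w i).det ≠ 0) (y : n → ℝ) :
    ∑ i, w i * (U *ᵥ y) i ^ 2 ≤ r * ∑ i, (U *ᵥ y) i ^ 2 := by
  obtain rfl | hy := eq_or_ne y 0
  · simp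
  have : Nontrivial (n → ℝ) := nontrivial_of_ne y 0 hy
  obtain ⟨ρ, h_le, z, hz, h_eq⟩ := exists_isMax_ratio
    (f := fun x ↦ ∑ i, w i * (U *ᵥ x) i ^ 2) (g := fun x ↦ ∑ i, (U *ᵥ x) i ^ 2)
    (by fun_prop) (by fun_prop)
    (fun c x ↦ by simp [mulVec_smul, mul_pow, mul_left_comm, Finset.mul_sum])
    (fun c x ↦ by simp [mulVec_smul, mul_pow, Finset.mul_sum])
    (fun x hx ↦ sum_sq_mulVec_pos hU hx)
  obtain hρ | hρ := le_total ρ r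
  · exact (h_le y).trans (by gcongr)
  have h_form (x : n → ℝ) : x ⬝ᵥ (weightedGram U fun i ↦ ρ - w i) *ᵥ x =
      ρ * ∑ i, (U *ᵥ x) i ^ 2 - ∑ i, w i * (U *ᵥ x) i ^ 2 := by
    simp only [dotProduct_weightedGram_mulVec, sub_mul, ← sq, Finset.sum_sub_distrib,
      Finset.mul_sum]
  have h_psd : (weightedGram U fun i ↦ ρ - w i).PosSemidef :=
    .of_dotProduct_mulVec_nonneg (isHermitian_weightedGram U _) fun x ↦ by
      rw [star_trivial, h_form, sub_nonneg]
      exact h_le x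
  have h_ker := (h_psd.dotProduct_mulVec_zero_iff z).1 <| by
    rw [star_trivial, h_form, sub_eq_zero]
    exact h_eq.symm
  exact (h_det ρ hρ (exists_mulVec_eq_zero_iff.1 ⟨z, hz, h_ker⟩)).elim

lemma exists_finset_sum_sq_mulVec_le [DecidableEq ι] (hU : Function.Injective U.mulVec) {q : ℝ}
    (hq : 0 < q) (hq' : q ≤ 1 / 4)
    (h_lev : ∀ i x, (U *ᵥ x) i ^ 2 ≤ q ^ 2 * ∑ j, (U *ᵥ x) j ^ 2) :
    ∃ T : Finset ι, ∀ x,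
      ∑ i ∈ T, (U *ᵥ x) i ^ 2 ≤ (1 / 2 + 3 * q) * ∑ i, (U *ᵥ x) i ^ 2 ∧
      ∑ i ∈ Tᶜ, (U *ᵥ x) i ^ 2 ≤ (1 / 2 + 3 * q) * ∑ i, (U *ᵥ x) i ^ 2 := by
  classical
  have h_bar (k : ι × Bool) : ∂[k] (pairedGramDet U) (fun _ ↦ q) ≤
      q * pairedGramDet U fun _ ↦ q := by
    have h_le := partialDiff_pairedGramDet_le hU hq (sq_nonneg q) h_lev k
    rwa [pow_two, mul_self_div_self] at h_le
  obtain ⟨s, hs⟩ := (isStableMultiaffine_pairedGramDet hU).exists_choice_forall_pos_of_barrier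
    (η := 2 * q) (by linarith) (by linarith) (posAbove_pairedGramDet hU hq)
    (by simpa using h_bar)
  have h_half (b : Bool) (x : n → ℝ) :
      ∑ i with b = s i, (U *ᵥ x) i ^ 2 ≤ (1 / 2 + 3 * q) * ∑ i, (U *ᵥ x) i ^ 2 := by
    have h_le := sum_mul_sq_mulVec_le_of_det_ne_zero hU (w := fun i ↦ if b = s i then 1 else 0)
      (r := 1 / 2 + 3 * q) (fun t ht ↦
        Finset.prod_ne_zero_iff.1 (hs t (by linarith)).ne' b (Finset.mem_univ b)) x
    simpa [Finset.sum_filter] using h_le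
  refine ⟨Finset.univ.filter fun i ↦ true = s i, fun x ↦ ⟨h_half true x, ?_⟩⟩
  convert h_half false x using 2
  ext i
  simp

end Weaver

section Frame

open Matrix

variable {n ι : Type*} [Fintype n] {U : Matrix ι n ℝ} {S T : Finset ι} {G : (n → ℝ) → ℝ}
  {A A' B B' K M q : ℝ}

/-- The rows of `U` indexed by `S` are a frame with bounds `A` and `B` relative to the quadratic
form `G`. -/
def HasFrameBounds (U : Matrix ι n ℝ) (S : Finset ι) (G : (n → ℝ) → ℝ) (A B : ℝ) : Prop :=
  ∀ x, A * G x ≤ ∑ i ∈ S, (U *ᵥ x) i ^ 2 ∧ ∑ i ∈ S, (U *ᵥ x) i ^ 2 ≤ B * G x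

namespace HasFrameBounds

lemma mono (h : HasFrameBounds U S G A B) (hG : ∀ x, 0 ≤ G x) (hA : A' ≤ A) (hB : B ≤ B') :
    HasFrameBounds U S G A' B' := fun x ↦
  ⟨(mul_le_mul_of_nonneg_right hA (hG x)).trans (h x).1,
    (h x).2.trans (mul_le_mul_of_nonneg_right hB (hG x))⟩

lemma trans (hT : HasFrameBounds U T (fun x ↦ ∑ i ∈ S, (U *ᵥ x) i ^ 2) A' B')
    (hS : HasFrameBounds U S G A B) (hA' : 0 ≤ A') (hB' : 0 ≤ B') :
    HasFrameBounds U T G (A' * A) (B' * B) := fun x ↦ by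
  rw [mul_assoc, mul_assoc]
  exact ⟨(mul_le_mul_of_nonneg_left (hS x).1 hA').trans (hT x).1,
    (hT x).2.trans (mul_le_mul_of_nonneg_left (hS x).2 hB')⟩

end HasFrameBounds

lemma mulVec_injective_of_sum_sq_pos [Fintype ι]
    (hU : ∀ x, x ≠ 0 → 0 < ∑ i, (U *ᵥ x) i ^ 2) : Function.Injective U.mulVec := by
  refine (injective_iff_map_eq_zero U.mulVecLin).2 fun x hx ↦ ?_
  by_contra h_ne
  have h_pos := hU x h_ne
  rw [← mulVecLin_apply, hx] at h_pos
  simp at h_pos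

lemma HasFrameBounds.card_le_card (h : HasFrameBounds U S G A B) (hA : 0 < A)
    (hG_pos : ∀ x, x ≠ 0 → 0 < G x) : Fintype.card n ≤ S.card := by
  let V : Matrix S n ℝ := U.submatrix (↑) id
  have h_inj : Function.Injective V.mulVecLin :=
    mulVec_injective_of_sum_sq_pos fun x hx ↦
      ((mul_pos hA (hG_pos x hx)).trans_le (h x).1).trans_eq
        (Finset.sum_coe_sort S fun i ↦ (U *ᵥ x) i ^ 2).symm
  simpa using LinearMap.finrank_le_finrank_of_injective h_inj

lemma exists_card_le_hasFrameBounds_half (hS : ∀ x, x ≠ 0 → 0 < ∑ i ∈ S, (U *ᵥ x) i ^ 2)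
    (hq : 0 < q) (hq' : q ≤ 1 / 4)
    (h_lev : ∀ i ∈ S, ∀ x, (U *ᵥ x) i ^ 2 ≤ q ^ 2 * ∑ j ∈ S, (U *ᵥ x) j ^ 2) :
    ∃ T : Finset ι, 2 * T.card ≤ S.card ∧
      HasFrameBounds U T (fun x ↦ ∑ i ∈ S, (U *ᵥ x) i ^ 2) (1 / 2 - 3 * q) (1 / 2 + 3 * q) := by
  classical
  let V : Matrix S n ℝ := U.submatrix (↑) id
  have h_sum (x : n → ℝ) : ∑ i, (V *ᵥ x) i ^ 2 = ∑ i ∈ S, (U *ᵥ x) i ^ 2 :=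
    Finset.sum_coe_sort S fun i ↦ (U *ᵥ x) i ^ 2
  obtain ⟨T, hT⟩ := exists_finset_sum_sq_mulVec_le (U := V)
    (mulVec_injective_of_sum_sq_pos fun x hx ↦ (hS x hx).trans_eq (h_sum x).symm) hq hq'
    fun i x ↦ (h_lev i i.2 x).trans_eq (by rw [h_sum])
  simp only [h_sum] at hT
  suffices h_half : ∀ T : Finset S, 2 * T.card ≤ S.card →
      (∀ x, ∑ i ∈ T, (V *ᵥ x) i ^ 2 ≤ (1 / 2 + 3 * q) * ∑ i ∈ S, (U *ᵥ x) i ^ 2) →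
      (∀ x, ∑ i ∈ Tᶜ, (V *ᵥ x) i ^ 2 ≤ (1 / 2 + 3 * q) * ∑ i ∈ S, (U *ᵥ x) i ^ 2) →
      ∃ T : Finset ι, 2 * T.card ≤ S.card ∧
        HasFrameBounds U T (fun x ↦ ∑ i ∈ S, (U *ᵥ x) i ^ 2) (1 / 2 - 3 * q) (1 / 2 + 3 * q) by
    have h_card := T.card_add_card_compl
    rw [Fintype.card_coe] at h_card
    obtain h_le | h_le := le_total T.card Tᶜ.card
    · exact h_half T (by lia) (fun x ↦ (hT x).1) fun x ↦ (hT x).2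
    · exact h_half Tᶜ (by lia) (fun x ↦ (hT x).2) fun x ↦ by simpa using (hT x).1
  intro T h_card h_le h_compl
  refine ⟨T.map (Function.Embedding.subtype _), by simpa using h_card, fun x ↦ ?_⟩
  have h_map : ∑ i ∈ T.map (Function.Embedding.subtype _), (U *ᵥ x) i ^ 2 =
      ∑ i ∈ T, (V *ᵥ x) i ^ 2 := Finset.sum_map _ _ _
  have h_split := (Finset.sum_add_sum_compl T fun i ↦ (V *ᵥ x) i ^ 2).trans (h_sum x)
  rw [h_map]
  exact ⟨by linarith [h_compl x], h_le x⟩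

/-- `S` has at most `M` elements and indexes a frame with bounds `M / 2` and `2 * M`, up to a
relative error of order `√(K / M)`. These errors form a geometric series along `M = 2 ^ k * m`,
which is why repeated halving preserves the property. -/
structure IsNearlyTight (U : Matrix ι n ℝ) (S : Finset ι) (G : (n → ℝ) → ℝ) (K M : ℝ) : Prop where
  card_le : S.card ≤ M
  hasFrameBounds : HasFrameBounds U S G ((1 / 2 - 15 * √(K / M)) * M) ((2 + 120 * √(K / M)) * M)

namespace IsNearlyTight

lemma hasFrameBounds_quarter_four (h : IsNearlyTight U S G K M) (hG : ∀ x, 0 ≤ G x) (hM : 0 < M)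
    (hKM : 3600 * K ≤ M) : HasFrameBounds U S G (1 / 4 * M) (4 * M) := by
  have hq : √(K / M) ≤ 1 / 60 :=
    Real.sqrt_le_iff.2 ⟨by norm_num, by rw [div_le_iff₀ hM]; linarith⟩
  exact h.hasFrameBounds.mono hG (by gcongr; linarith) (by gcongr; linarith)

/-- Halving costs `1 ∓ 12 * q`, where `q = √(K / (2 * M))`, while the allowed error grows from
`15 * q` to `15 * (√2 * q)` and from `120 * q` to `120 * (√2 * q)`. -/
lemma exists_half (h : IsNearlyTight U S G K (2 * M)) (hG : ∀ x, 0 ≤ G x)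
    (hG_pos : ∀ x, x ≠ 0 → 0 < G x) (hK : 0 < K) (hKM : 3600 * K ≤ 2 * M)
    (h_le : ∀ i x, (U *ᵥ x) i ^ 2 ≤ K * G x) : ∃ T, IsNearlyTight U T G K M := by
  have hM : 0 < M := by linarith
  have h_quarter := h.hasFrameBounds_quarter_four hG (by positivity) hKM
  have h_card := h.card_le
  have h_bounds := h.hasFrameBounds
  have hq' : √(K / (2 * M)) ≤ 1 / 60 :=
    Real.sqrt_le_iff.2 ⟨by norm_num, by rw [div_le_iff₀ (by positivity)]; linarith⟩
  have h_sqrt : √(K / M) = √2 * √(K / (2 * M)) := by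
    rw [← Real.sqrt_mul zero_le_two]
    congr 1
    field_simp
  have hKq : √(K / (2 * M)) ^ 2 * (2 * M) = K := by
    rw [Real.sq_sqrt (by positivity)]
    field_simp
  have hq : 0 < √(K / (2 * M)) := by positivity
  set q := √(K / (2 * M))
  obtain ⟨T, hT_card, hT⟩ := exists_card_le_hasFrameBounds_half (U := U) (S := S) (q := 2 * q)
    (fun x hx ↦ (h_quarter x).1.trans_lt' (by have := hG_pos x hx; positivity))
    (by positivity) (by linarith) fun i _ x ↦ by
      calc (U *ᵥ x) i ^ 2 ≤ K * G x := h_le i x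
        _ = (2 * q) ^ 2 * (1 / 4 * (2 * M) * G x) := by rw [← hKq]; ring
        _ ≤ _ := mul_le_mul_of_nonneg_left (h_quarter x).1 (sq_nonneg _)
  have h_sqrt_two : 1.4 * q ≤ √2 * q := by
    gcongr
    exact Real.le_sqrt_of_sq_le (by norm_num)
  have h_lower : 1 / 2 - 15 * (√2 * q) ≤ 2 * ((1 / 2 - 3 * (2 * q)) * (1 / 2 - 15 * q)) := by
    nlinarith
  have h_upper : 2 * ((1 / 2 + 3 * (2 * q)) * (2 + 120 * q)) ≤ 2 + 120 * (√2 * q) := by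
    nlinarith
  refine ⟨T, ?_, (hT.trans h_bounds (by linarith) (by positivity)).mono hG ?_ ?_⟩
  · have : (2 * T.card : ℝ) ≤ S.card := mod_cast hT_card
    linarith
  · rw [h_sqrt]
    linarith [mul_le_mul_of_nonneg_right h_lower hM.le]
  · rw [h_sqrt]
    linarith [mul_le_mul_of_nonneg_right h_upper hM.le]

lemma exists_of_two_pow_mul (hG : ∀ x, 0 ≤ G x) (hG_pos : ∀ x, x ≠ 0 → 0 < G x) (hK : 0 < K)
    (hKM : 3600 * K ≤ M) (h_le : ∀ i x, (U *ᵥ x) i ^ 2 ≤ K * G x) (k : ℕ)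
    (h : IsNearlyTight U S G K (2 ^ k * M)) : ∃ T, IsNearlyTight U T G K M := by
  induction k generalizing S with
  | zero => exact ⟨S, by simpa using h⟩
  | succ k ih =>
    rw [pow_succ', mul_assoc] at h
    have hM : 0 ≤ M := by linarith
    have h_pow : M ≤ 2 ^ k * M := le_mul_of_one_le_left hM (one_le_pow₀ one_le_two)
    obtain ⟨T, hT⟩ := h.exists_half hG hG_pos hK (by linarith) h_le
    exact ih hT

end IsNearlyTight

lemma isNearlyTight_floor_multiplicities {w : ι → ℝ} (hw : ∀ i ∈ T, 0 ≤ w i)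
    (hw_sum : ∑ i ∈ T, w i = 1) (hG : ∀ x, 0 ≤ G x) (hM : 0 < M) (hTM : 4 * T.card * K ≤ M)
    (h_le : ∀ i x, (U *ᵥ x) i ^ 2 ≤ K * G x)
    (h_bounds : ∀ x, 3 / 4 * G x ≤ ∑ i ∈ T, w i * (U *ᵥ x) i ^ 2 ∧
      ∑ i ∈ T, w i * (U *ᵥ x) i ^ 2 ≤ 3 / 2 * G x) :
    IsNearlyTight (U.submatrix (Sigma.fst : (Σ _ : ι, ℕ) → ι) id)
      (T.sigma fun i ↦ Finset.range ⌊w i * M⌋₊) G K M where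
  card_le := by
    simp only [Finset.card_sigma, Finset.card_range, Nat.cast_sum]
    calc ∑ i ∈ T, (⌊w i * M⌋₊ : ℝ) ≤ ∑ i ∈ T, w i * M :=
          Finset.sum_le_sum fun i hi ↦ Nat.floor_le (mul_nonneg (hw i hi) hM.le)
      _ = M := by rw [← Finset.sum_mul, hw_sum, one_mul]
  hasFrameBounds x := by
    have h_sum : ∑ i ∈ T.sigma fun i ↦ Finset.range ⌊w i * M⌋₊,
        (U.submatrix (Sigma.fst : (Σ _ : ι, ℕ) → ι) id *ᵥ x) i ^ 2 =
          ∑ i ∈ T, ⌊w i * M⌋₊ * (U *ᵥ x) i ^ 2 := by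
      have h_row (i : Σ _ : ι, ℕ) :
          (U.submatrix (Sigma.fst : (Σ _ : ι, ℕ) → ι) id *ᵥ x) i = (U *ᵥ x) i.1 := rfl
      simp only [Finset.sum_sigma, h_row, Finset.sum_const, Finset.card_range, nsmul_eq_mul]
    have h_lower : M * ∑ i ∈ T, w i * (U *ᵥ x) i ^ 2 - T.card * (K * G x) ≤
        ∑ i ∈ T, ⌊w i * M⌋₊ * (U *ᵥ x) i ^ 2 := by
      rw [Finset.mul_sum, ← nsmul_eq_mul, ← Finset.sum_const, ← Finset.sum_sub_distrib]
      refine Finset.sum_le_sum fun i _ ↦ ?_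
      have h_floor := mul_le_mul_of_nonneg_right (Nat.lt_floor_add_one (w i * M)).le
        (sq_nonneg ((U *ᵥ x) i))
      linarith [h_le i x]
    have h_upper : ∑ i ∈ T, ⌊w i * M⌋₊ * (U *ᵥ x) i ^ 2 ≤ M * ∑ i ∈ T, w i * (U *ᵥ x) i ^ 2 := by
      rw [Finset.mul_sum]
      refine Finset.sum_le_sum fun i hi ↦ ?_
      have h_floor := mul_le_mul_of_nonneg_right
        (Nat.floor_le (mul_nonneg (hw i hi) hM.le)) (sq_nonneg ((U *ᵥ x) i))
      linarith
    have h_err : 0 ≤ √(K / M) * (M * G x) :=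
      mul_nonneg (Real.sqrt_nonneg _) (mul_nonneg hM.le (hG x))
    have h_trunc := mul_le_mul_of_nonneg_right hTM (hG x)
    have h_lower_bound := mul_le_mul_of_nonneg_left (h_bounds x).1 hM.le
    have h_upper_bound := mul_le_mul_of_nonneg_left (h_bounds x).2 hM.le
    rw [h_sum]
    constructor <;> linarith

lemma exists_hasFrameBounds_of_weights {w : ι → ℝ} (hw : ∀ i ∈ T, 0 ≤ w i)
    (hw_sum : ∑ i ∈ T, w i = 1) (hG : ∀ x, 0 ≤ G x) (hG_pos : ∀ x, x ≠ 0 → 0 < G x) (hK : 0 < K)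
    (hKM : 3600 * K ≤ M) (h_le : ∀ i x, (U *ᵥ x) i ^ 2 ≤ K * G x)
    (h_bounds : ∀ x, 3 / 4 * G x ≤ ∑ i ∈ T, w i * (U *ᵥ x) i ^ 2 ∧
      ∑ i ∈ T, w i * (U *ᵥ x) i ^ 2 ≤ 3 / 2 * G x) :
    ∃ S : Finset (Σ _ : ι, ℕ), S.card ≤ M ∧
      HasFrameBounds (U.submatrix Sigma.fst id) S G (1 / 4 * M) (4 * M) := by
  have hM : 0 < M := by linarith
  obtain ⟨k, hk⟩ := pow_unbounded_of_one_lt (4 * T.card * K / M) (one_lt_two (α := ℝ))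
  have h_tight := isNearlyTight_floor_multiplicities hw hw_sum hG (by positivity)
    ((div_lt_iff₀ hM).1 hk).le h_le h_bounds
  obtain ⟨S, hS⟩ := h_tight.exists_of_two_pow_mul hG hG_pos hK hKM fun i x ↦ h_le i.1 x
  exact ⟨S, hS.card_le, hS.hasFrameBounds_quarter_four hG hM hKM⟩

end Frame

section Quadrature

open Matrix

variable {Ω n : Type*}

/-- The entries of the rank-one matrix `uᵀ * u` for the row `u` of `U` at `ω`, as one vector. -/
def rowProducts (U : Matrix Ω n ℝ) (ω : Ω) (p : n × n) : ℝ :=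
  U ω p.1 * U ω p.2

variable [Fintype n]

lemma abs_sum_mul_mul_le (P : n × n → ℝ) (x : n → ℝ) :
    |∑ p, P p * (x p.1 * x p.2)| ≤ Fintype.card (n × n) * (‖P‖ * ‖x‖ ^ 2) := by
  refine (Finset.abs_sum_le_sum_abs _ _).trans ?_
  rw [← nsmul_eq_mul]
  refine Finset.sum_le_card_nsmul _ _ _ fun p _ ↦ ?_
  rw [abs_mul, abs_mul, sq]
  gcongr
  exacts [norm_le_pi_norm P p, norm_le_pi_norm x p.1, norm_le_pi_norm x p.2]

lemma sq_mulVec_eq_sum_rowProducts (U : Matrix Ω n ℝ) (x : n → ℝ) (ω : Ω) :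
    (U *ᵥ x) ω ^ 2 = ∑ p, rowProducts U ω p * (x p.1 * x p.2) := by
  rw [sq, mulVec, dotProduct, Finset.sum_mul_sum, Fintype.sum_prod_type]
  simp only [rowProducts, mul_mul_mul_comm]

variable [MeasurableSpace Ω] {μ : Measure Ω} {U : Matrix Ω n ℝ} {ε : ℝ}

lemma exists_weights_dist_integral_lt {E : Type*} [NormedAddCommGroup E] [NormedSpace ℝ E]
    [CompleteSpace E] [IsProbabilityMeasure μ] {Φ : Ω → E} (hΦ : Integrable Φ μ) (hε : 0 < ε) :
    ∃ (T : Finset Ω) (w : Ω → ℝ), (∀ ω ∈ T, 0 ≤ w ω) ∧ ∑ ω ∈ T, w ω = 1 ∧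
      dist (∫ ω, Φ ω ∂μ) (∑ ω ∈ T, w ω • Φ ω) < ε := by
  have h_mem : ∫ ω, Φ ω ∂μ ∈ closure (convexHull ℝ (Set.range Φ)) :=
    (convex_convexHull ℝ _).closure.integral_mem isClosed_closure
      (.of_forall fun ω ↦ subset_closure (subset_convexHull ℝ _ ⟨ω, rfl⟩)) hΦ
  obtain ⟨P, hP, h_dist⟩ := Metric.mem_closure_iff.1 h_mem ε hε
  rw [convexHull_range_eq_exists_affineCombination] at hP
  obtain ⟨T, w, hw, hw_sum, rfl⟩ := hP
  rw [Finset.affineCombination_eq_linear_combination _ _ _ hw_sum] at h_dist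
  exact ⟨T, w, hw, hw_sum, h_dist⟩

lemma integrable_rowProducts (hU : ∀ k, MemLp (U.col k) 2 μ) : Integrable (rowProducts U) μ :=
  .of_eval fun p ↦ (hU p.1).integrable_mul (hU p.2)

lemma integral_sq_mulVec (hU : ∀ k, MemLp (U.col k) 2 μ) (x : n → ℝ) :
    ∫ ω, (U *ᵥ x) ω ^ 2 ∂μ = ∑ p, (∫ ω, rowProducts U ω ∂μ) p * (x p.1 * x p.2) := by
  have h_int := (integrable_rowProducts hU).eval
  simp only [sq_mulVec_eq_sum_rowProducts]
  rw [integral_finsetSum _ fun p _ ↦ (h_int p).mul_const _]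
  simp only [integral_mul_const, eval_integral h_int]

lemma exists_norm_sq_le_integral_sq_mulVec (hU : ∀ k, MemLp (U.col k) 2 μ)
    (hU_pos : ∀ x, x ≠ 0 → 0 < ∫ ω, (U *ᵥ x) ω ^ 2 ∂μ) :
    ∃ ρ, 0 < ρ ∧ ∀ x, ‖x‖ ^ 2 ≤ ρ * ∫ ω, (U *ᵥ x) ω ^ 2 ∂μ := by
  obtain _ | _ := subsingleton_or_nontrivial (n → ℝ)
  · exact ⟨1, one_pos, fun x ↦ by simp [Subsingleton.elim x 0]⟩
  obtain ⟨ρ, h_le, z, hz, h_eq⟩ := exists_isMax_ratio (f := fun x : n → ℝ ↦ ‖x‖ ^ 2)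
    (g := fun x ↦ ∫ ω, (U *ᵥ x) ω ^ 2 ∂μ) (by fun_prop)
    (by simp only [integral_sq_mulVec hU]; fun_prop)
    (fun c x ↦ by rw [norm_smul, mul_pow, Real.norm_eq_abs, sq_abs])
    (fun c x ↦ by simp only [mulVec_smul, Pi.smul_apply, smul_eq_mul, mul_pow, integral_const_mul])
    hU_pos
  have hρ : 0 < ρ * ∫ ω, (U *ᵥ z) ω ^ 2 ∂μ := h_eq ▸ pow_pos (norm_pos_iff.2 hz) 2
  exact ⟨ρ, pos_of_mul_pos_left hρ (hU_pos z hz).le, h_le⟩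

lemma exists_weights_abs_sum_sub_integral_le [IsProbabilityMeasure μ]
    (hU : ∀ k, MemLp (U.col k) 2 μ) (hU_pos : ∀ x, x ≠ 0 → 0 < ∫ ω, (U *ᵥ x) ω ^ 2 ∂μ)
    (hε : 0 < ε) :
    ∃ (T : Finset Ω) (w : Ω → ℝ), (∀ ω ∈ T, 0 ≤ w ω) ∧ ∑ ω ∈ T, w ω = 1 ∧
      ∀ x, |∑ ω ∈ T, w ω * (U *ᵥ x) ω ^ 2 - ∫ ω, (U *ᵥ x) ω ^ 2 ∂μ| ≤
        ε * ∫ ω, (U *ᵥ x) ω ^ 2 ∂μ := by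
  obtain ⟨ρ, hρ, h_norm⟩ := exists_norm_sq_le_integral_sq_mulVec hU hU_pos
  set c := (Fintype.card (n × n) : ℝ)
  obtain ⟨T, w, hw, hw_sum, h_dist⟩ := exists_weights_dist_integral_lt
    (integrable_rowProducts hU) (ε := ε / ((c + 1) * ρ)) (by positivity)
  refine ⟨T, w, hw, hw_sum, fun x ↦ ?_⟩
  have hc : c + 1 ≠ 0 := by positivity
  rw [dist_comm, dist_eq_norm] at h_dist
  have h_sum : ∑ ω ∈ T, w ω * (U *ᵥ x) ω ^ 2 =
      ∑ p, (∑ ω ∈ T, w ω • rowProducts U ω) p * (x p.1 * x p.2) := by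
    simp only [sq_mulVec_eq_sum_rowProducts, Finset.mul_sum, Finset.sum_apply, Finset.sum_mul,
      Pi.smul_apply, smul_eq_mul, mul_assoc]
    exact Finset.sum_comm
  set P := ∑ ω ∈ T, w ω • rowProducts U ω
  calc |∑ ω ∈ T, w ω * (U *ᵥ x) ω ^ 2 - ∫ ω, (U *ᵥ x) ω ^ 2 ∂μ|
      = |∑ p, (P - ∫ ω, rowProducts U ω ∂μ) p * (x p.1 * x p.2)| := by
        simp only [h_sum, integral_sq_mulVec hU, Pi.sub_apply, sub_mul, Finset.sum_sub_distrib]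
    _ ≤ c * (‖P - ∫ ω, rowProducts U ω ∂μ‖ * ‖x‖ ^ 2) := abs_sum_mul_mul_le _ x
    _ ≤ (c + 1) * (ε / ((c + 1) * ρ) * (ρ * ∫ ω, (U *ᵥ x) ω ^ 2 ∂μ)) := by
        gcongr
        exacts [le_add_of_nonneg_right zero_le_one, h_norm x]
    _ = ε * ∫ ω, (U *ᵥ x) ω ^ 2 ∂μ := by field_simp

end Quadrature

section Sampling

open Matrix

variable {Ω n : Type*} [Fintype n] [MeasurableSpace Ω] {μ : Measure Ω} {U : Matrix Ω n ℝ}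
  {X : Submodule ℝ (Ω → ℝ)} {K M : ℝ}

lemma integral_sq_mulVec_pos (hU : Function.Injective U.mulVec)
    (h_le : ∀ ω x, (U *ᵥ x) ω ^ 2 ≤ K * ∫ ω, (U *ᵥ x) ω ^ 2 ∂μ) {x : n → ℝ} (hx : x ≠ 0) :
    0 < ∫ ω, (U *ᵥ x) ω ^ 2 ∂μ := by
  refine (integral_nonneg fun ω ↦ sq_nonneg _).lt_of_ne fun h_zero ↦ hx (hU ?_)
  ext ω
  have h_sq := h_le ω x
  rw [← h_zero, mul_zero] at h_sq
  simpa using pow_eq_zero_iff two_ne_zero |>.1 (h_sq.antisymm (sq_nonneg _))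

variable [IsProbabilityMeasure μ]

lemma exists_finset_hasFrameBounds_integral (hU_memLp : ∀ k, MemLp (U.col k) 2 μ)
    (hU : Function.Injective U.mulVec) (hK : 0 < K) (hKM : 3600 * K ≤ M)
    (h_le : ∀ ω x, (U *ᵥ x) ω ^ 2 ≤ K * ∫ ω, (U *ᵥ x) ω ^ 2 ∂μ) :
    ∃ S : Finset (Σ _ : Ω, ℕ), S.card ≤ M ∧
      HasFrameBounds (U.submatrix Sigma.fst id) S (fun x ↦ ∫ ω, (U *ᵥ x) ω ^ 2 ∂μ)
        (1 / 4 * M) (4 * M) := by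
  have h_nonneg (x : n → ℝ) : 0 ≤ ∫ ω, (U *ᵥ x) ω ^ 2 ∂μ := integral_nonneg fun ω ↦ sq_nonneg _
  have h_pos (x : n → ℝ) (hx : x ≠ 0) := integral_sq_mulVec_pos hU h_le hx
  obtain ⟨T, w, hw, hw_sum, h_approx⟩ :=
    exists_weights_abs_sum_sub_integral_le hU_memLp h_pos (ε := 1 / 4) (by norm_num)
  refine exists_hasFrameBounds_of_weights hw hw_sum h_nonneg h_pos hK hKM h_le fun x ↦ ?_
  have h_abs := abs_le.1 (h_approx x)
  constructor <;> linarith [h_nonneg x]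

lemma exists_sampling_points [FiniteDimensional ℝ X] (hX : ∀ f ∈ X, MemLp f 2 μ) (hK : 0 < K)
    (hKM : 3600 * K ≤ M) (h_le : ∀ f ∈ X, ∀ ω, f ω ^ 2 ≤ K * ∫ ω, f ω ^ 2 ∂μ) :
    ∃ (m : ℕ) (ξ : Fin m → Ω), m ≤ M ∧ Module.finrank ℝ X ≤ m ∧ ∀ f ∈ X,
      1 / 4 * M * ∫ ω, f ω ^ 2 ∂μ ≤ ∑ j, f (ξ j) ^ 2 ∧
        ∑ j, f (ξ j) ^ 2 ≤ 4 * M * ∫ ω, f ω ^ 2 ∂μ := by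
  let b := Module.finBasis ℝ X
  let U : Matrix Ω (Fin (Module.finrank ℝ X)) ℝ := of fun ω k ↦ (b k : Ω → ℝ) ω
  have hU_apply (x) : U *ᵥ x = (b.equivFun.symm x : X) := by
    ext ω
    simp [U, mulVec, dotProduct, b.equivFun_symm_apply, mul_comm]
  have hU : Function.Injective U.mulVec := fun x y hxy ↦ by
    simpa only [hU_apply, Subtype.coe_inj, EmbeddingLike.apply_eq_iff_eq] using hxy
  have hU_le (ω x) : (U *ᵥ x) ω ^ 2 ≤ K * ∫ ω, (U *ᵥ x) ω ^ 2 ∂μ := by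
    rw [hU_apply]
    exact h_le _ (Subtype.prop _) ω
  obtain ⟨S, hS_card, hS⟩ :=
    exists_finset_hasFrameBounds_integral (U := U) (fun k ↦ hX _ (b k).2) hU hK hKM hU_le
  refine ⟨S.card, fun j ↦ (S.equivFin.symm j : Σ _ : Ω, ℕ).1, hS_card, ?_, fun f hf ↦ ?_⟩
  · simpa using hS.card_le_card (by linarith) fun x ↦
      integral_sq_mulVec_pos hU hU_le
  · have h_coord : U *ᵥ b.equivFun ⟨f, hf⟩ = f := by rw [hU_apply, b.equivFun.symm_apply_apply]
    have h_sum : ∑ j, f (S.equivFin.symm j : Σ _ : Ω, ℕ).1 ^ 2 = ∑ i ∈ S, f i.1 ^ 2 :=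
      (Equiv.sum_comp S.equivFin.symm fun i : S ↦ f i.1.1 ^ 2).trans
        (Finset.sum_coe_sort S fun i ↦ f i.1 ^ 2)
    have h_row (i : Σ _ : Ω, ℕ) :
        (U.submatrix Sigma.fst id *ᵥ b.equivFun ⟨f, hf⟩) i = f i.1 := congrFun h_coord i.1
    rw [h_sum]
    simpa only [h_coord, h_row] using hS (b.equivFun ⟨f, hf⟩)

end Sampling

section Norms

variable {Ω : Type*} {f : Ω → ℝ} {N : ℕ} {t : ℝ}

lemma abs_le_supNorm (hf : ∃ B : ℝ, ∀ ω, |f ω| ≤ B) (ω : Ω) : |f ω| ≤ supNorm f := by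
  obtain ⟨B, hB⟩ := hf
  exact le_ciSup (f := fun ω ↦ |f ω|) ⟨B, Set.forall_mem_range.2 hB⟩ ω

lemma le_rpow_mul_rpow_of_mul_sq_le {a c D : ℝ} (ha : 0 ≤ a) (hc : 0 < c) (h : c * a ^ 2 ≤ D) :
    a ≤ c ^ (-(1 : ℝ) / 2) * D ^ ((1 : ℝ) / 2) := by
  calc a = c ^ (-(1 : ℝ) / 2) * (c * a ^ 2) ^ ((1 : ℝ) / 2) := by
        rw [Real.mul_rpow hc.le (sq_nonneg a), ← mul_assoc, ← Real.rpow_add hc,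
          ← Real.sqrt_eq_rpow (a ^ 2), Real.sqrt_sq ha]
        norm_num
    _ ≤ c ^ (-(1 : ℝ) / 2) * D ^ ((1 : ℝ) / 2) := by gcongr

variable [MeasurableSpace Ω] {μ : Measure Ω}

lemma LpNorm_two (μ : Measure Ω) (f : Ω → ℝ) : LpNorm μ 2 f = √(∫ ω, f ω ^ 2 ∂μ) := by
  simp only [LpNorm, Real.sqrt_eq_rpow, Real.rpow_two, sq_abs]

lemma LpNorm_two_sq (μ : Measure Ω) (f : Ω → ℝ) : LpNorm μ 2 f ^ 2 = ∫ ω, f ω ^ 2 ∂μ := by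
  rw [LpNorm_two, Real.sq_sqrt (integral_nonneg fun ω ↦ sq_nonneg _)]

lemma sq_le_mul_integral_sq_of_supNorm_le (hf : ∃ B : ℝ, ∀ ω, |f ω| ≤ B)
    (h : supNorm f ≤ t * √N * LpNorm μ 2 f) (ω : Ω) :
    f ω ^ 2 ≤ t ^ 2 * N * ∫ ω, f ω ^ 2 ∂μ := by
  have h_sq := pow_le_pow_left₀ (abs_nonneg _) ((abs_le_supNorm hf ω).trans h) 2
  rwa [sq_abs, mul_pow, mul_pow, Real.sq_sqrt N.cast_nonneg, LpNorm_two_sq] at h_sq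

lemma discretization_of_sum_sq_bounds {m : ℕ} {ξ : Fin m → Ω} {c C : ℝ} (ht : 0 ≤ t)
    (hN : 0 < N) (hNm : N ≤ m) (hc : 0 < c) (hC : 0 ≤ C)
    (h_sup : supNorm f ≤ t * √N * LpNorm μ 2 f)
    (h_lower : c * m * ∫ ω, f ω ^ 2 ∂μ ≤ ∑ j, f (ξ j) ^ 2)
    (h_upper : ∑ j, f (ξ j) ^ 2 ≤ C * N * ∫ ω, f ω ^ 2 ∂μ) :
    supNorm f ≤ c ^ (-(1 : ℝ) / 2) * t * √N *
        ((1 / (m : ℝ)) * ∑ j, |f (ξ j)| ^ 2) ^ ((1 : ℝ) / 2) ∧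
      c * LpNorm μ 2 f ^ 2 ≤ (1 / (m : ℝ)) * ∑ j, |f (ξ j)| ^ 2 ∧
      (1 / (m : ℝ)) * ∑ j, |f (ξ j)| ^ 2 ≤ C * LpNorm μ 2 f ^ 2 := by
  have hm : (0 : ℝ) < m := mod_cast hN.trans_le hNm
  simp only [sq_abs, one_div_mul_eq_div (m : ℝ)]
  rw [← LpNorm_two_sq] at h_lower h_upper
  have h_disc : c * LpNorm μ 2 f ^ 2 ≤ (∑ j, f (ξ j) ^ 2) / m := by
    rw [le_div_iff₀ hm]
    linarith
  refine ⟨?_, h_disc, ?_⟩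
  · have h_norm := le_rpow_mul_rpow_of_mul_sq_le (by rw [LpNorm_two]; positivity) hc h_disc
    calc supNorm f ≤ t * √N * LpNorm μ 2 f := h_sup
      _ ≤ t * √N * (c ^ (-(1 : ℝ) / 2) * ((∑ j, f (ξ j) ^ 2) / m) ^ ((1 : ℝ) / 2)) := by gcongr
      _ = _ := by ring
  · rw [div_le_iff₀ hm]
    calc ∑ j, f (ξ j) ^ 2 ≤ C * N * LpNorm μ 2 f ^ 2 := h_upper
      _ ≤ C * m * LpNorm μ 2 f ^ 2 := by gcongr
      _ = C * LpNorm μ 2 f ^ 2 * m := by ring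

end Norms

theorem stmt_14_general {Ω : Type*} [MeasurableSpace Ω] {μ : Measure Ω} [IsProbabilityMeasure μ]
    {t : ℝ} (ht : 0 < t) {X : Submodule ℝ (Ω → ℝ)} (h_meas : ∀ f ∈ X, AEStronglyMeasurable f μ)
    (h_bdd : ∀ f ∈ X, ∃ B : ℝ, ∀ ω, |f ω| ≤ B)
    (h_sup : ∀ f ∈ X, supNorm f ≤ t * √(Module.finrank ℝ X) * LpNorm μ 2 f) :
    ∃ (m : ℕ) (ξ : Fin m → Ω), (m : ℝ) ≤ 3600 * t ^ 2 * Module.finrank ℝ X ∧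
      ∀ f ∈ X,
        supNorm f ≤ (1 / 4 : ℝ) ^ (-(1 : ℝ) / 2) * t * √(Module.finrank ℝ X) *
          ((1 / (m : ℝ)) * ∑ j, |f (ξ j)| ^ 2) ^ ((1 : ℝ) / 2) ∧
        1 / 4 * LpNorm μ 2 f ^ 2 ≤ (1 / (m : ℝ)) * ∑ j, |f (ξ j)| ^ 2 ∧
        (1 / (m : ℝ)) * ∑ j, |f (ξ j)| ^ 2 ≤ 14400 * t ^ 2 * LpNorm μ 2 f ^ 2 := by
  have h_le (f) (hf : f ∈ X) := sq_le_mul_integral_sq_of_supNorm_le (h_bdd f hf) (h_sup f hf)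
  obtain hN | hN := (Module.finrank ℝ X).eq_zero_or_pos
  · simp only [hN, Nat.cast_zero, Real.sqrt_zero, mul_zero, zero_mul] at h_le h_sup ⊢
    refine ⟨0, Fin.elim0, by simp, fun f hf ↦ ⟨h_sup f hf, ?_⟩⟩
    have hf_zero (ω) : f ω = 0 := by simpa using (h_le f hf ω).antisymm (sq_nonneg _)
    simp [LpNorm_two_sq, hf_zero]
  · have := FiniteDimensional.of_finrank_pos hN
    obtain ⟨m, ξ, hm, hNm, h_bounds⟩ := exists_sampling_points (K := t ^ 2 * Module.finrank ℝ X)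
      (fun f hf ↦ (h_bdd f hf).elim fun B hB ↦ .of_bound (h_meas f hf) B (.of_forall hB))
      (by positivity) (mul_assoc _ _ _).ge h_le
    refine ⟨m, ξ, hm, fun f hf ↦ discretization_of_sum_sq_bounds ht.le hN hNm (by norm_num)
      (by positivity) (h_sup f hf) (le_trans ?_ (h_bounds f hf).1)
      ((h_bounds f hf).2.trans_eq (by ring))⟩
    gcongr

/-- Theorem 5.9: there are absolute constants `C₁, C₂, C₃ > 0` such that if an
`N`-dimensional space `X_N` of bounded measurable functions on `Ω ⊂ ℝ^d` satisfies the
Nikol'skii inequality `‖f‖_∞ ≤ tN^{1/2}‖f‖_2`, then there are `m ≤ C₁t²N` points with both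
`‖f‖_∞ ≤ C₂^{-1/2} t N^{1/2} ((1/m)∑_j |f(ξ^j)|²)^{1/2}` and
`C₂‖f‖_2² ≤ (1/m)∑_j |f(ξ^j)|² ≤ C₃t²‖f‖_2²` for all `f ∈ X_N`. -/
theorem stmt_14 :
    ∃ C₁ C₂ C₃ : ℝ, 0 < C₁ ∧ 0 < C₂ ∧ 0 < C₃ ∧
      ∀ (d : ℕ) (Ω : Set (Fin d → ℝ)), Ω.Nonempty →
      ∀ (μ : Measure Ω) [IsProbabilityMeasure μ],
      ∀ (t : ℝ), 0 < t →
      ∀ (N : ℕ) (X : Submodule ℝ (Ω → ℝ)), Module.finrank ℝ X = N →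
        (∀ f ∈ X, Measurable f) →
        (∀ f ∈ X, ∃ B : ℝ, ∀ ω, |f ω| ≤ B) →
        (∀ f ∈ X, supNorm f ≤ t * Real.sqrt N * LpNorm μ 2 f) →
        ∃ (m : ℕ) (ξ : Fin m → Ω), (m : ℝ) ≤ C₁ * t ^ 2 * N ∧
          ∀ f ∈ X,
            supNorm f ≤ C₂ ^ (-(1 : ℝ) / 2) * t * Real.sqrt N *
              ((1 / (m : ℝ)) * ∑ j, |f (ξ j)| ^ 2) ^ ((1 : ℝ) / 2) ∧
            C₂ * (LpNorm μ 2 f) ^ 2 ≤ (1 / (m : ℝ)) * ∑ j, |f (ξ j)| ^ 2 ∧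
            (1 / (m : ℝ)) * ∑ j, |f (ξ j)| ^ 2 ≤ C₃ * t ^ 2 * (LpNorm μ 2 f) ^ 2 := by
  refine ⟨3600, 1 / 4, 14400, by norm_num, by norm_num, by norm_num, ?_⟩
  rintro d Ω - μ _ t ht N X rfl h_meas h_bdd h_sup
  exact stmt_14_general ht (fun f hf ↦ (h_meas f hf).aestronglyMeasurable) h_bdd h_sup
end
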